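/- arXiv:0707.0568 — 5 statements merged into one kernel-verified Lean document; each statement's English description precedes it below -/
import Mathlib

section
/- Game G admits at least one Nash equilibrium, for every choice of channel gains H_rq(k) with H_qq(k) ≠ 0, gap parameters Γ_q ≥ 1, and spectral-mask limits p_q^max(k) ∈ (0,∞]. (Theorem 2, existence part.) -/
/-!
The payoffs are continuous and concave in the player's own strategy, and the strategy sets are
convex and compact. With the Nikaido–Isoda function `ψ(p, y) = ∑ q, (R_q(y_q, p_{-q}) - R_q(p))`,
a profile `p` is an equilibrium as soon as `ψ(p, y) ≤ 0` for all `y`. Otherwise every set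
`{y | 0 < ψ(p, y)}` is nonempty and convex, and each of its members still works at nearby profiles,
so a smooth partition of unity selects from these sets a smooth self-map; a fixed point `p` of it
has `0 < ψ(p, p) = 0`.

The fixed point of the smooth map comes from the no-retraction theorem, proved by the volume
argument of Milnor and Rogers. If `r` fixes the boundary of a ball, then `id + t (r - id)` is a
bijection of the ball for small `t`, so the integral of its Jacobian, which is a polynomial in `t`,
is the volume of the ball for every `t`. But if `r` maps into the sphere, the Jacobian vanishes at
`t = 1`.
-/

open scoped ENNReal

namespace NCGame

/-- The data of game `G`: `Q` users, `N` carriers, channel gains `chan r q k` (from source `r`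
to destination `q` on carrier `k`), gap parameters `gap q ≥ 1`, and spectral-mask limits
`pmax q k ∈ (0, ∞]`. -/
structure GameData (Q N : ℕ) where
  chan : Fin Q → Fin Q → Fin N → ℂ
  gap : Fin Q → ℝ
  pmax : Fin Q → Fin N → ℝ≥0∞
  chan_diag_ne : ∀ q k, chan q q k ≠ 0
  one_le_gap : ∀ q, 1 ≤ gap q
  pmax_pos : ∀ q k, 0 < pmax q k

namespace GameData

variable {Q N : ℕ}

/-- The strategy set `P_q` of user `q`: powers within the spectral mask whose average
does not exceed the power budget. -/
def stratSet (G : GameData Q N) (q : Fin Q) : Set (Fin N → ℝ) :=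
  { p | (∀ k, 0 ≤ p k ∧ ENNReal.ofReal (p k) ≤ G.pmax q k) ∧
        (1 / (N : ℝ)) * ∑ k, p k ≤ 1 }

/-- Interference-plus-noise `1 + Σ_{r ≠ q} |H_rq(k)|² p_r(k)` seen by user `q` on carrier `k`. -/
noncomputable def interf (G : GameData Q N) (q : Fin Q) (p : Fin Q → Fin N → ℝ)
    (k : Fin N) : ℝ :=
  1 + ∑ r ∈ Finset.univ.erase q, ‖G.chan r q k‖ ^ 2 * p r k

/-- The payoff `R_q(p)` of user `q` at the strategy profile `p`. -/
noncomputable def payoff (G : GameData Q N) (q : Fin Q) (p : Fin Q → Fin N → ℝ) : ℝ :=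
  (1 / (N : ℝ)) * ∑ k, Real.log (1 +
    (1 / G.gap q) * (‖G.chan q q k‖ ^ 2 * p q k) / G.interf q p k)

/-- `p` is a Nash equilibrium of game `G`. -/
def isNE (G : GameData Q N) (p : Fin Q → Fin N → ℝ) : Prop :=
  (∀ q, p q ∈ G.stratSet q) ∧
  ∀ q, ∀ pq ∈ G.stratSet q, G.payoff q (Function.update p q pq) ≤ G.payoff q p

end GameData

end NCGame

namespace NCGame

open Filter Metric MeasureTheory Set Topology
open scoped Polynomial

section BrouwerFixedPoint

lemma image_eq_of_isOpen_image_of_eqOn_frontier {X : Type*} [TopologicalSpace X] [T2Space X]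
    {U : Set X} {h : X → X} (hUpre : IsPreconnected U) (hUcpt : IsCompact (closure U))
    (hcont : ContinuousOn h (closure U)) (hopen : IsOpen (h '' U)) (hmaps : MapsTo h U U)
    (hfr : EqOn h id (frontier U)) : h '' U = U := by
  obtain rfl | ⟨x, hx⟩ := U.eq_empty_or_nonempty
  · exact image_empty h
  refine hmaps.image_subset.antisymm (hUpre.subset_of_closure_inter_subset hopen
    ⟨h x, hmaps hx, mem_image_of_mem h hx⟩ ?_)
  rintro y ⟨hy, hyU⟩
  have hclosure : closure (h '' U) ⊆ h '' closure U :=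
    closure_minimal (image_mono subset_closure) (hUcpt.image_of_continuousOn hcont).isClosed
  obtain ⟨z, hz, rfl⟩ := hclosure hy
  refine mem_image_of_mem h ?_
  by_contra hzU
  have hzfr : z ∈ frontier U := ⟨hz, fun hzint => hzU (interior_subset hzint)⟩
  rw [hfr hzfr] at hyU
  exact hzU hyU

lemma injOn_id_add_of_lipschitzOnWith {E : Type*} [NormedAddCommGroup E] {s : Set E} {g : E → E}
    {K : NNReal} (hg : LipschitzOnWith K g s) (hK : K < 1) : InjOn (fun x => x + g x) s := by
  intro x hx y hy hxy
  have hsub : x - y = g y - g x := sub_eq_sub_iff_add_eq_add.2 (hxy.trans (add_comm _ _))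
  have hle : ‖x - y‖ ≤ K * ‖x - y‖ := by
    rw [norm_sub_rev x y]
    nth_rewrite 1 [norm_sub_rev, hsub]
    exact hg.norm_sub_le hy hx
  refine sub_eq_zero.1 (norm_le_zero_iff.1 ?_)
  nlinarith [norm_nonneg (x - y), NNReal.coe_lt_one.2 hK]

lemma exists_polynomial_eval_eq_det_one_add_smul {R M : Type*} [CommRing R] [Nontrivial R]
    [AddCommGroup M] [Module R M] [Module.Free R M] [Module.Finite R M] (f : Module.End R M) :
    ∃ P : R[X], P.natDegree ≤ Module.finrank R M ∧ ∀ t, P.eval t = LinearMap.det (1 + t • f) := by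
  set b := Module.finBasis R M
  set A := LinearMap.toMatrix b b f
  refine ⟨((Polynomial.X : R[X]) • A.map Polynomial.C + (1 : Matrix _ _ R).map Polynomial.C).det,
    ?_, fun t => ?_⟩
  · simpa only [Fintype.card_fin] using Polynomial.natDegree_det_X_add_C_le A 1
  · have hdet : LinearMap.det (1 + t • f) = (1 + t • A).det := by
      rw [← LinearMap.det_toMatrix b, map_add, map_smul, LinearMap.toMatrix_one]
    rw [hdet, ← Polynomial.coe_evalRingHom, RingHom.map_det]
    congr 1
    ext i j
    by_cases hij : i = j <;> simp [hij, add_comm, mul_comm t]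

variable {E : Type*} [NormedAddCommGroup E] [NormedSpace ℝ E]

lemma eventually_forall_det_one_add_smul_pos {S : Set (E →L[ℝ] E)} (hS : IsCompact S) :
    ∀ᶠ t : ℝ in 𝓝 0, ∀ A ∈ S, 0 < (1 + t • A).det := by
  refine hS.eventually_forall_of_forall_eventually fun A _ => ?_
  have hcont : Continuous fun p : ℝ × (E →L[ℝ] E) => (1 + p.1 • p.2).det :=
    ContinuousLinearMap.continuous_det.comp (by fun_prop)
  refine continuous_const.continuousAt.eventually_lt hcont.continuousAt ?_
  simp [ContinuousLinearMap.det, ContinuousLinearMap.one_def]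

lemma continuousOn_fderiv_of_contDiffAt {s : Set E} {g : E → E}
    (hg : ∀ x ∈ s, ContDiffAt ℝ 1 g x) : ContinuousOn (fderiv ℝ g) s := fun x hx =>
  ((hg x hx).fderiv_right (m := 0) (by norm_num)).continuousAt.continuousWithinAt

variable [FiniteDimensional ℝ E]

lemma isOpen_image_of_hasStrictFDerivAt_det_ne_zero {U : Set E} {h : E → E} {h' : E → E →L[ℝ] E}
    (hU : IsOpen U) (hh : ∀ x ∈ U, HasStrictFDerivAt h (h' x) x)
    (hdet : ∀ x ∈ U, (h' x).det ≠ 0) : IsOpen (h '' U) := by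
  rw [isOpen_iff_mem_nhds]
  rintro _ ⟨x, hx, rfl⟩
  have hequiv := hh x hx
  rw [← ContinuousLinearMap.coe_toContinuousLinearEquivOfDetNeZero _ (hdet x hx)] at hequiv
  rw [← hequiv.map_nhds_eq_of_equiv]
  exact image_mem_map (hU.mem_nhds hx)

/-- Interpolating `t ↦ det (1 + t A)` at fixed nodes expresses its coefficients linearly in finitely
many of its values, so that they can be integrated. -/
lemma exists_polynomial_eval_eq_integral_det_one_add_smul {X : Type*} [MeasurableSpace X]
    {μ : Measure X} {A : X → E →L[ℝ] E} (hA : ∀ t : ℝ, Integrable (fun x => (1 + t • A x).det) μ) :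
    ∃ P : ℝ[X], ∀ t : ℝ, P.eval t = ∫ x, (1 + t • A x).det ∂μ := by
  obtain ⟨s, hs⟩ := Infinite.exists_subset_card_eq ℝ (Module.finrank ℝ E + 1)
  have hinterp : ∀ (B : E →L[ℝ] E) (t : ℝ), (1 + t • B).det =
      ∑ i ∈ s, (1 + i • B).det * (Lagrange.basis s id i).eval t := by
    intro B t
    obtain ⟨P, hdeg, hP⟩ := exists_polynomial_eval_eq_det_one_add_smul (B : E →ₗ[ℝ] E)
    have hdeg' : P.degree < s.card :=
      Polynomial.degree_le_natDegree.trans_lt (by exact_mod_cast hdeg.trans_lt (by omega))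
    have heval : ∀ u : ℝ, (1 + u • B).det = P.eval u := fun u => (hP u).symm
    simp_rw [heval]
    conv_lhs => rw [Lagrange.eq_interpolate (v := id) Function.injective_id.injOn hdeg']
    simp [Lagrange.interpolate_apply, Polynomial.eval_finsetSum]
  refine ⟨∑ i ∈ s, Polynomial.C (∫ x, (1 + i • A x).det ∂μ) * Lagrange.basis s id i, fun t => ?_⟩
  simp_rw [fun x => hinterp (A x) t]
  rw [integral_finsetSum _ fun i _ => (hA i).mul_const _]
  simp [Polynomial.eval_finsetSum, integral_mul_const]

section Measure

variable [MeasurableSpace E] [BorelSpace E] (μ : Measure E) [μ.IsAddHaarMeasure]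

lemma setIntegral_det_eq_measureReal_of_bijOn {s t : Set E} {h : E → E} {h' : E → E →L[ℝ] E}
    (hs : MeasurableSet s) (hh : ∀ x ∈ s, HasFDerivWithinAt h (h' x) s x) (hbij : BijOn h s t)
    (hdet : ∀ x ∈ s, 0 ≤ (h' x).det) : ∫ x in s, (h' x).det ∂μ = μ.real t := by
  calc ∫ x in s, (h' x).det ∂μ
      = ∫ x in s, |(h' x).det| • (1 : ℝ) ∂μ :=
        setIntegral_congr_fun hs fun x hx => by simp [abs_of_nonneg (hdet x hx)]
    _ = ∫ _ in h '' s, (1 : ℝ) ∂μ :=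
        (integral_image_eq_integral_abs_det_fderiv_smul μ hs hh hbij.injOn fun _ => 1).symm
    _ = μ.real t := by simp [hbij.image_eq]

variable {U : Set E}

lemma eventually_setIntegral_det_one_add_smul_fderiv_eq (hUo : IsOpen U) (hUc : Convex ℝ U)
    (hUb : Bornology.IsBounded U) {g : E → E} (hg : ∀ x ∈ closure U, ContDiffAt ℝ 1 g x)
    (hmaps : ∀ x ∈ U, x + g x ∈ closure U) (hfr : EqOn g 0 (frontier U)) :
    ∀ᶠ t : ℝ in 𝓝[>] 0, ∫ x in U, (1 + t • fderiv ℝ g x).det ∂μ = μ.real U := by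
  have hcpt : IsCompact (closure U) := hUb.isCompact_closure
  obtain ⟨K, hK⟩ : ∃ K, LipschitzOnWith K g (closure U) :=
    ContDiffOn.exists_lipschitzOnWith (fun x hx => (hg x hx).contDiffWithinAt) one_ne_zero
      hUc.closure hcpt
  have hfderiv : ContinuousOn (fderiv ℝ g) (closure U) := continuousOn_fderiv_of_contDiffAt hg
  have hcontraction : ∀ᶠ t : ℝ in 𝓝 0, ‖t‖₊ * K < 1 :=
    ((continuous_nnnorm.mul continuous_const).tendsto' (0 : ℝ) 0 (by simp)).eventually_lt_const
      one_pos
  have hinvertible := eventually_forall_det_one_add_smul_pos (hcpt.image_of_continuousOn hfderiv)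
  filter_upwards [Ioo_mem_nhdsGT one_pos, nhdsWithin_le_nhds hcontraction,
    nhdsWithin_le_nhds hinvertible] with t ⟨ht0, ht1⟩ htK htdet
  have hdet : ∀ x ∈ U, 0 < (1 + t • fderiv ℝ g x).det := fun x hx =>
    htdet _ (mem_image_of_mem _ (subset_closure hx))
  have hderiv : ∀ x ∈ U, HasStrictFDerivAt (fun y => y + t • g y) (1 + t • fderiv ℝ g x) x :=
    fun x hx => (hasStrictFDerivAt_id x).add
      (((hg x (subset_closure hx)).hasStrictFDerivAt one_ne_zero).const_smul t)
  have hmapsU : MapsTo (fun y => y + t • g y) U U := fun x hx => by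
    rw [← hUo.interior_eq] at hx ⊢
    refine hUc.openSegment_interior_closure_subset_interior hx (hmaps x (interior_subset hx))
      ⟨1 - t, t, sub_pos.2 ht1, ht0, sub_add_cancel 1 t, ?_⟩
    module
  have himage : (fun y => y + t • g y) '' U = U := by
    refine image_eq_of_isOpen_image_of_eqOn_frontier hUc.isPreconnected hcpt
      (fun x hx => ?_)
      (isOpen_image_of_hasStrictFDerivAt_det_ne_zero hUo hderiv fun x hx => (hdet x hx).ne')
      hmapsU fun x hx => by simp [hfr hx]
    exact (continuousAt_id.add ((hg x hx).continuousAt.const_smul t)).continuousWithinAt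
  have hinj : InjOn (fun y => y + t • g y) U :=
    injOn_id_add_of_lipschitzOnWith
      (((lipschitzWith_smul t).comp_lipschitzOnWith hK).mono subset_closure) htK
  exact setIntegral_det_eq_measureReal_of_bijOn μ hUo.measurableSet
    (fun x hx => (hderiv x hx).hasFDerivAt.hasFDerivWithinAt) ⟨hmapsU, hinj, himage.ge⟩
    fun x hx => (hdet x hx).le

lemma setIntegral_det_fderiv_eq_measureReal (hUo : IsOpen U) (hUc : Convex ℝ U)
    (hUb : Bornology.IsBounded U) {r : E → E} (hr : ∀ x ∈ closure U, ContDiffAt ℝ 1 r x)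
    (hmaps : MapsTo r U (closure U)) (hfr : EqOn r id (frontier U)) :
    ∫ x in U, (fderiv ℝ r x).det ∂μ = μ.real U := by
  set g : E → E := fun x => r x - x with hg_def
  have hg : ∀ x ∈ closure U, ContDiffAt ℝ 1 g x := fun x hx => (hr x hx).sub contDiffAt_id
  have hfderiv : ContinuousOn (fderiv ℝ g) (closure U) := continuousOn_fderiv_of_contDiffAt hg
  have hint : ∀ t : ℝ, IntegrableOn (fun x => (1 + t • fderiv ℝ g x).det) U μ := fun t =>
    ((ContinuousLinearMap.continuous_det.comp_continuousOn
      (continuousOn_const.add (hfderiv.const_smul t))).integrableOn_compact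
        hUb.isCompact_closure).mono_set subset_closure
  obtain ⟨P, hP⟩ := exists_polynomial_eval_eq_integral_det_one_add_smul hint
  have hsmall : ∀ᶠ t : ℝ in 𝓝[>] 0, P.eval t = (Polynomial.C (μ.real U)).eval t := by
    simp_rw [hP, Polynomial.eval_C]
    exact eventually_setIntegral_det_one_add_smul_fderiv_eq μ hUo hUc hUb hg
      (fun x hx => by simpa [hg_def] using hmaps hx) (fun x hx => by simp [hg_def, hfr hx])
  have hconst : P = Polynomial.C (μ.real U) := by
    obtain ⟨ε, hε, hsub⟩ := mem_nhdsGT_iff_exists_Ioo_subset.1 hsmall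
    exact P.eq_of_infinite_eval_eq _ ((Ioo_infinite hε).mono hsub)
  calc ∫ x in U, (fderiv ℝ r x).det ∂μ
      = ∫ x in U, (1 + (1 : ℝ) • fderiv ℝ g x).det ∂μ := by
        refine setIntegral_congr_fun hUo.measurableSet fun x hx => ?_
        have hrx := (hr x (subset_closure hx)).differentiableAt one_ne_zero
        have hfderiv_g : fderiv ℝ g x = fderiv ℝ r x - 1 :=
          (hrx.hasFDerivAt.sub (hasFDerivAt_id x)).fderiv
        rw [hfderiv_g, one_smul, add_sub_cancel]
    _ = μ.real U := by rw [← hP, hconst, Polynomial.eval_C]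

end Measure

section InnerProduct

variable {F : Type*} [NormedAddCommGroup F] [InnerProductSpace ℝ F] [FiniteDimensional ℝ F]

lemma det_fderiv_eq_zero_of_eventually_mem_sphere {r : F → F} {x c : F} {R : ℝ} (hR : R ≠ 0)
    (hr : DifferentiableAt ℝ r x) (hsphere : ∀ᶠ y in 𝓝 x, r y ∈ sphere c R) :
    (fderiv ℝ r x).det = 0 := by
  by_contra hdet
  have hconst : HasFDerivAt (fun y => ‖r y - c‖ ^ 2) (0 : F →L[ℝ] ℝ) x := by
    refine (hasFDerivAt_const (R ^ 2) x).congr_of_eventuallyEq ?_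
    filter_upwards [hsphere] with y hy
    rw [mem_sphere_iff_norm.1 hy]
  have horth : ∀ v, inner ℝ (r x - c) (fderiv ℝ r x v) = 0 := fun v => by
    simpa [inner_sub_left] using
      DFunLike.congr_fun ((hr.hasFDerivAt.sub_const c).norm_sq.unique hconst) v
  obtain ⟨v, hv⟩ :=
    ((fderiv ℝ r x).toContinuousLinearEquivOfDetNeZero hdet).surjective (r x - c)
  rw [ContinuousLinearMap.toContinuousLinearEquivOfDetNeZero_apply] at hv
  have hzero := horth v
  rw [hv, inner_self_eq_zero, ← norm_eq_zero, mem_sphere_iff_norm.1 hsphere.self_of_nhds] at hzero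
  exact hR hzero

lemma exists_mem_sphere_ne_of_mapsTo_sphere {r : F → F} {c : F} {R : ℝ} (hR : 0 < R)
    (hr : ∀ x ∈ closedBall c R, ContDiffAt ℝ 1 r x)
    (hmaps : MapsTo r (closedBall c R) (sphere c R)) : ∃ x ∈ sphere c R, r x ≠ x := by
  by_contra! hfix
  borelize F
  have hclosure : closure (ball c R) = closedBall c R := closure_ball c hR.ne'
  have hvolume : ∫ x in ball c R, (fderiv ℝ r x).det = volume.real (ball c R) := by
    refine setIntegral_det_fderiv_eq_measureReal volume isOpen_ball (convex_ball c R)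
      isBounded_ball (by rwa [hclosure]) ?_ ?_
    · rw [hclosure]
      exact hmaps.mono ball_subset_closedBall sphere_subset_closedBall
    · rwa [frontier_ball c hR.ne']
  have hzero : ∫ x in ball c R, (fderiv ℝ r x).det = 0 := by
    refine setIntegral_eq_zero_of_forall_eq_zero fun x hx => ?_
    refine det_fderiv_eq_zero_of_eventually_mem_sphere (c := c) hR.ne'
      ((hr x (ball_subset_closedBall hx)).differentiableAt one_ne_zero) ?_
    filter_upwards [isOpen_ball.mem_nhds hx] with y hy using hmaps (ball_subset_closedBall hy)
  rw [hzero] at hvolume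
  exact (measure_ball_pos volume c hR).ne'
    ((measureReal_eq_zero_iff measure_ball_lt_top.ne).1 hvolume.symm)

/-- If `g` had no fixed point, then `x - g x`, deformed into `x` between the spheres of radii `R`
and `2 R`, would never vanish, and normalizing it would retract a ball onto its sphere. -/
lemma exists_fixedPoint_of_contDiff_of_norm_le {g : F → F} (hg : ContDiff ℝ 1 g) {R : ℝ}
    (hbound : ∀ x, ‖g x‖ ≤ R) : ∃ x, g x = x := by
  by_contra! hfix
  have hR : 0 < R := by
    refine ((norm_nonneg _).trans (hbound 0)).lt_of_ne fun hR0 => hfix 0 ?_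
    simpa [← hR0] using hbound 0
  let χ : ContDiffBump (0 : F) := ⟨R, 2 * R, hR, by linarith⟩
  set v : F → F := fun x => x - χ x • g x with hv_def
  have hv : ContDiff ℝ 1 v := contDiff_id.sub (χ.contDiff.smul hg)
  have hv0 : ∀ x, v x ≠ 0 := by
    intro x hvx
    have hx : x = χ x • g x := sub_eq_zero.1 hvx
    have hxR : ‖x‖ ≤ R := by
      rw [hx, norm_smul, Real.norm_of_nonneg χ.nonneg]
      exact (mul_le_of_le_one_left (norm_nonneg _) χ.le_one).trans (hbound x)
    have hχ : χ x = 1 := χ.one_of_mem_closedBall (mem_closedBall_zero_iff.2 hxR)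
    rw [hχ, one_smul] at hx
    exact hfix x hx.symm
  obtain ⟨x, hx, hne⟩ := exists_mem_sphere_ne_of_mapsTo_sphere (c := 0)
    (r := fun x => (2 * R * ‖v x‖⁻¹) • v x) (by positivity : 0 < 2 * R)
    (fun x _ => (contDiffAt_const.mul ((hv.contDiffAt.norm ℝ (hv0 x)).inv
      (norm_ne_zero_iff.2 (hv0 x)))).smul hv.contDiffAt)
    (fun x _ => by
      rw [mem_sphere_zero_iff_norm, norm_smul, norm_mul, norm_inv, norm_norm, mul_assoc,
        inv_mul_cancel₀ (norm_ne_zero_iff.2 (hv0 x)), mul_one, Real.norm_of_nonneg (by positivity)])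
  have hχ : χ x = 0 := χ.zero_of_le_dist (mem_sphere.1 hx).ge
  refine hne ?_
  simp only [hv_def, hχ, zero_smul, sub_zero, mem_sphere_zero_iff_norm.1 hx]
  rw [mul_inv_cancel₀ (by positivity), one_smul]

end InnerProduct

lemma exists_fixedPoint_of_contDiff_of_isBounded_range {g : E → E} (hg : ContDiff ℝ 1 g)
    (hbound : Bornology.IsBounded (range g)) : ∃ x, g x = x := by
  let φ : E ≃L[ℝ] EuclideanSpace ℝ (Fin (Module.finrank ℝ E)) := toEuclidean
  obtain ⟨R, hR⟩ := (φ.lipschitz.isBounded_image hbound).exists_norm_le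
  obtain ⟨y, hy⟩ := exists_fixedPoint_of_contDiff_of_norm_le (g := fun y => φ (g (φ.symm y)))
    (φ.contDiff.comp (hg.comp φ.symm.contDiff))
    fun y => hR _ (mem_image_of_mem φ (mem_range_self _))
  exact ⟨φ.symm y, (φ.eq_symm_apply).2 hy⟩

/-- The Fan–Browder fixed point theorem: gluing constant local selections by a smooth partition of
unity turns a convex-valued map into a smooth one. -/
theorem exists_mem_of_convex_of_eventually_mem {K : Set E} {T : E → Set E} (hne : K.Nonempty)
    (hKcpt : IsCompact K) (hKconv : Convex ℝ K) (hT : ∀ x ∈ K, Convex ℝ (T x))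
    (hsel : ∀ x ∈ K, ∃ y ∈ K, ∀ᶠ z in 𝓝[K] x, y ∈ T z) : ∃ x ∈ K, x ∈ T x := by
  let t : E → Set E := fun x => {y | y ∈ K ∧ (x ∈ K → y ∈ T x)}
  have hconv : ∀ x, Convex ℝ (t x) := by
    intro x
    by_cases hx : x ∈ K
    · simpa [t, hx] using hKconv.inter (hT x hx)
    · simpa [t, hx] using hKconv
  have hlocal : ∀ x, ∃ y, ∀ᶠ z in 𝓝 x, y ∈ t z := by
    intro x
    by_cases hx : x ∈ K
    · obtain ⟨y, hy, hyT⟩ := hsel x hx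
      exact ⟨y, (eventually_nhdsWithin_iff.1 hyT).mono fun z hz => ⟨hy, hz⟩⟩
    · obtain ⟨y, hy⟩ := hne
      have hKc : ∀ᶠ z in 𝓝 x, z ∉ K := hKcpt.isClosed.isOpen_compl.mem_nhds hx
      exact ⟨y, hKc.mono fun z hz => ⟨hy, fun hzK => (hz hzK).elim⟩⟩
  obtain ⟨g, hg⟩ := exists_contMDiffMap_forall_mem_convex_of_local_const (n := 1)
    (modelWithCornersSelf ℝ E) hconv hlocal
  obtain ⟨x, hx⟩ := exists_fixedPoint_of_contDiff_of_isBounded_range g.contMDiff.contDiff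
    (hKcpt.isBounded.subset (range_subset_iff.2 fun x => (hg x).1))
  have hgx := hg x
  rw [hx] at hgx
  exact ⟨x, hgx.1, hgx.2 hgx.1⟩

end BrouwerFixedPoint

section ConcaveGames

lemma concaveOn_sum {ι V : Type*} [AddCommGroup V] [Module ℝ V] {t : Finset ι} {s : Set V}
    {f : ι → V → ℝ} (hs : Convex ℝ s) (hf : ∀ i ∈ t, ConcaveOn ℝ s (f i)) :
    ConcaveOn ℝ s fun x => ∑ i ∈ t, f i x := by
  rw [← Finset.sum_fn]
  exact Finset.sum_induction f (ConcaveOn ℝ s) (fun _ _ => ConcaveOn.add) (concaveOn_const 0 hs) hf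

variable {ι : Type*} [DecidableEq ι] {E : ι → Type*}

lemma update_mem_univ_pi {K : ∀ i, Set (E i)} {x : ∀ i, E i} (hx : x ∈ univ.pi K) {i : ι}
    {y : E i} (hy : y ∈ K i) : Function.update x i y ∈ univ.pi K :=
  (update_mem_pi_iff_of_mem hx).2 fun _ => hy

section NikaidoIsoda

variable [Fintype ι]

/-- The Nikaido–Isoda function of a game with payoffs `u`: the sum over the players of what each one
gains by switching from `x i` to `y i` while the others stay at `x`. -/
def nikaidoIsoda (u : ι → (∀ i, E i) → ℝ) (x y : ∀ i, E i) : ℝ :=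
  ∑ i, (u i (Function.update x i (y i)) - u i x)

lemma nikaidoIsoda_self (u : ι → (∀ i, E i) → ℝ) (x : ∀ i, E i) : nikaidoIsoda u x x = 0 := by
  simp [nikaidoIsoda]

lemma nikaidoIsoda_update (u : ι → (∀ i, E i) → ℝ) (x : ∀ i, E i) (i : ι) (y : E i) :
    nikaidoIsoda u x (Function.update x i y) = u i (Function.update x i y) - u i x := by
  rw [nikaidoIsoda, Finset.sum_eq_single_of_mem i (Finset.mem_univ i), Function.update_self]
  intro j _ hj
  rw [Function.update_of_ne hj, Function.update_eq_self, sub_self]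

lemma continuousOn_nikaidoIsoda_left [∀ i, TopologicalSpace (E i)] {K : ∀ i, Set (E i)}
    {u : ι → (∀ i, E i) → ℝ} (hu : ∀ i, ContinuousOn (u i) (univ.pi K)) {y : ∀ i, E i}
    (hy : y ∈ univ.pi K) : ContinuousOn (fun x => nikaidoIsoda u x y) (univ.pi K) := by
  refine continuousOn_finsetSum _ fun i _ => ContinuousOn.sub ?_ (hu i)
  exact (hu i).comp (continuous_id.update i continuous_const).continuousOn
    fun x hx => update_mem_univ_pi hx (hy i (mem_univ i))

lemma concaveOn_nikaidoIsoda_right [∀ i, AddCommGroup (E i)] [∀ i, Module ℝ (E i)]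
    {K : ∀ i, Set (E i)} {u : ι → (∀ i, E i) → ℝ} {x : ∀ i, E i}
    (hu : ∀ i, ConcaveOn ℝ (K i) fun y => u i (Function.update x i y)) :
    ConcaveOn ℝ (univ.pi K) (nikaidoIsoda u x) := by
  have hconv : Convex ℝ (univ.pi K) := convex_pi fun i _ => (hu i).1
  refine concaveOn_sum hconv fun i _ => ConcaveOn.sub ?_ (convexOn_const _ hconv)
  exact ((hu i).comp_linearMap (LinearMap.proj i)).subset (fun y hy => hy i (mem_univ i)) hconv

end NikaidoIsoda

/-- Nash's theorem for concave games. -/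
theorem exists_forall_update_le_of_concaveOn [Finite ι] [∀ i, NormedAddCommGroup (E i)]
    [∀ i, NormedSpace ℝ (E i)] [∀ i, FiniteDimensional ℝ (E i)] {K : ∀ i, Set (E i)}
    {u : ι → (∀ i, E i) → ℝ} (hne : ∀ i, (K i).Nonempty) (hcpt : ∀ i, IsCompact (K i))
    (hconv : ∀ i, Convex ℝ (K i)) (hcont : ∀ i, ContinuousOn (u i) (univ.pi K))
    (hconc : ∀ x ∈ univ.pi K, ∀ i, ConcaveOn ℝ (K i) fun y => u i (Function.update x i y)) :
    ∃ x ∈ univ.pi K, ∀ i, ∀ y ∈ K i, u i (Function.update x i y) ≤ u i x := by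
  cases nonempty_fintype ι
  by_contra! hdev
  obtain ⟨x, -, hx⟩ := exists_mem_of_convex_of_eventually_mem
    (T := fun x => {y ∈ univ.pi K | 0 < nikaidoIsoda u x y})
    (univ_pi_nonempty_iff.2 hne) (isCompact_univ_pi hcpt) (convex_pi fun i _ => hconv i)
    (fun x hx => (concaveOn_nikaidoIsoda_right (hconc x hx)).convex_gt 0) fun x hx => by
      obtain ⟨i, y, hy, hlt⟩ := hdev x hx
      have hmem := update_mem_univ_pi hx hy
      refine ⟨Function.update x i y, hmem, ?_⟩
      have hpos : 0 < nikaidoIsoda u x (Function.update x i y) := by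
        rwa [nikaidoIsoda_update, sub_pos]
      filter_upwards [(continuousOn_nikaidoIsoda_left hcont hmem x hx).eventually_const_lt hpos]
        with z hz using ⟨hmem, hz⟩
  exact hx.2.ne' (nikaidoIsoda_self u x)

end ConcaveGames

lemma concaveOn_log_one_add_mul {a : ℝ} (ha : 0 ≤ a) :
    ConcaveOn ℝ (Ici 0) fun x => Real.log (1 + a * x) := by
  have haffine := strictConcaveOn_log_Ioi.concaveOn.comp_affineMap
    (AffineMap.lineMap (1 : ℝ) (1 + a))
  refine (haffine.subset (fun x hx => ?_) (convex_Ici 0)).congr fun x _ => ?_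
  · have : 0 ≤ x * a := mul_nonneg hx ha
    simp only [mem_preimage, mem_Ioi, AffineMap.lineMap_apply, vsub_eq_sub, vadd_eq_add,
      smul_eq_mul, add_sub_cancel_left]
    linarith
  · simp [AffineMap.lineMap_apply, mul_comm, add_comm]

namespace GameData

variable {Q N : ℕ} (G : GameData Q N)

lemma zero_mem_stratSet (q : Fin Q) : 0 ∈ G.stratSet q := by
  simp [stratSet]

lemma stratSet_eq (q : Fin Q) : G.stratSet q =
    univ.pi (fun k => Ici 0 ∩ ENNReal.ofReal ⁻¹' Iic (G.pmax q k)) ∩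
      {p | (1 / (N : ℝ)) * ∑ k, p k ≤ 1} := by
  ext p
  simp [stratSet]

lemma convex_stratSet (q : Fin Q) : Convex ℝ (G.stratSet q) := by
  rw [stratSet_eq]
  refine (convex_pi fun k _ => ?_).inter (convex_halfSpace_le ⟨fun x y => ?_, fun c x => ?_⟩ 1)
  · exact (ordConnected_Ici.inter (ordConnected_Iic.preimage_mono ENNReal.ofReal_mono)).convex
  · simp only [Pi.add_apply, Finset.sum_add_distrib, mul_add]
  · simp only [Pi.smul_apply, ← Finset.smul_sum, mul_smul_comm]

lemma isClosed_stratSet (q : Fin Q) : IsClosed (G.stratSet q) := by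
  rw [stratSet_eq]
  exact (isClosed_set_pi fun k _ =>
    isClosed_Ici.inter (isClosed_Iic.preimage ENNReal.continuous_ofReal)).inter
      (isClosed_le (by fun_prop) continuous_const)

lemma apply_le_natCast_of_mem_stratSet {q : Fin Q} {p : Fin N → ℝ} (hp : p ∈ G.stratSet q)
    (k : Fin N) : p k ≤ N := by
  have hN : (0 : ℝ) < N := mod_cast k.pos
  have hsum := hp.2
  rw [one_div, inv_mul_le_one₀ hN] at hsum
  exact (Finset.single_le_sum (fun j _ => (hp.1 j).1) (Finset.mem_univ k)).trans hsum

lemma isCompact_stratSet (q : Fin Q) : IsCompact (G.stratSet q) :=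
  (isCompact_Icc (a := (0 : Fin N → ℝ)) (b := fun _ => N)).of_isClosed_subset
    (G.isClosed_stratSet q) fun _ hp =>
      ⟨fun k => (hp.1 k).1, G.apply_le_natCast_of_mem_stratSet hp⟩

lemma gap_pos (q : Fin Q) : 0 < G.gap q := one_pos.trans_le (G.one_le_gap q)

lemma interf_pos {p : Fin Q → Fin N → ℝ} (hp : ∀ q k, 0 ≤ p q k) (q : Fin Q) (k : Fin N) :
    0 < G.interf q p k :=
  add_pos_of_pos_of_nonneg one_pos (Finset.sum_nonneg fun r _ => mul_nonneg (sq_nonneg _) (hp r k))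

lemma interf_update (p : Fin Q → Fin N → ℝ) (q : Fin Q) (y : Fin N → ℝ) (k : Fin N) :
    G.interf q (Function.update p q y) k = G.interf q p k := by
  unfold interf
  congr 1
  refine Finset.sum_congr rfl fun r hr => ?_
  rw [Function.update_of_ne (Finset.ne_of_mem_erase hr)]

lemma continuousOn_payoff (q : Fin Q) : ContinuousOn (G.payoff q) {p | ∀ q k, 0 ≤ p q k} := by
  have hinterf : ∀ k, Continuous fun p => G.interf q p k := fun k => by
    unfold interf
    fun_prop
  unfold payoff
  refine continuousOn_const.mul (continuousOn_finsetSum _ fun k _ => ContinuousOn.log ?_ ?_)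
  · exact continuousOn_const.add (ContinuousOn.div (by fun_prop) (hinterf k).continuousOn
      fun p hp => (G.interf_pos hp q k).ne')
  · intro p hp
    have hgap := G.gap_pos q
    have hI := G.interf_pos hp q k
    have hpk := hp q k
    positivity

lemma concaveOn_payoff_update {p : Fin Q → Fin N → ℝ} (hp : ∀ q k, 0 ≤ p q k) (q : Fin Q) :
    ConcaveOn ℝ (Ici 0) fun y => G.payoff q (Function.update p q y) := by
  have hgain : ∀ k, 0 ≤ 1 / G.gap q * ‖G.chan q q k‖ ^ 2 / G.interf q p k := fun k => by
    have hgap := G.gap_pos q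
    have hI := G.interf_pos hp q k
    positivity
  have hsum : ConcaveOn ℝ (Ici (0 : Fin N → ℝ)) fun y =>
      ∑ k, Real.log (1 + 1 / G.gap q * ‖G.chan q q k‖ ^ 2 / G.interf q p k * y k) :=
    concaveOn_sum (convex_Ici 0) fun k _ =>
      ((concaveOn_log_one_add_mul (hgain k)).comp_linearMap
        (LinearMap.proj k : (Fin N → ℝ) →ₗ[ℝ] ℝ)).subset (fun _ hy => hy k) (convex_Ici 0)
  refine (hsum.smul (by positivity : 0 ≤ 1 / (N : ℝ))).congr fun y _ => ?_
  simp only [payoff, interf_update, Function.update_self, smul_eq_mul]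
  congr! 4
  ring

end GameData

end NCGame

/-- **Theorem 2 (existence part).** Game `G` admits at least one Nash equilibrium, for every
choice of channel gains `H_rq(k)` with `H_qq(k) ≠ 0`, gap parameters `Γ_q ≥ 1`, and
spectral-mask limits `p_q^max(k) ∈ (0,∞]`. -/
theorem NCGame.existence_of_NE (Q N : ℕ) (hQ : 1 ≤ Q) (hN : 1 ≤ N)
    (G : NCGame.GameData Q N) :
    ∃ p : Fin Q → Fin N → ℝ, G.isNE p := by
  have hnonneg : ∀ p ∈ Set.univ.pi G.stratSet, ∀ q k, 0 ≤ p q k := fun p hp q k =>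
    ((hp q (Set.mem_univ q)).1 k).1
  obtain ⟨p, hp, hbest⟩ := NCGame.exists_forall_update_le_of_concaveOn
    (fun q => ⟨0, G.zero_mem_stratSet q⟩) G.isCompact_stratSet G.convex_stratSet
    (fun q => (G.continuousOn_payoff q).mono hnonneg) fun p hp q =>
      (G.concaveOn_payoff_update (hnonneg p hp) q).subset (fun _ hy k => (hy.1 k).1)
        (G.convex_stratSet q)
  exact ⟨p, fun q => hp q (Set.mem_univ q), hbest⟩
end

section
/- Let W be an N×N complex unitary matrix, Λ an N×N diagonal matrix with nonnegative real diagonal entries λ_1,…,λ_N, P > 0, and p̄_1,…,p̄_N ≥ 0. Consider maximizing f(F) = log det(I + F^H·W·Λ·W^H·F) over F ∈ ℂ^{N×N} subject to (1/N)·tr(F F^H) ≤ P and [W^H F F^H W]_kk ≤ p̄_k for every k. Then: (a) for every feasible F, the matrix F' = W·diag(√p_1,…,√p_N) with p_k = [W^H F F^H W]_kk is feasible and satisfies f(F') ≥ f(F); (b) the maximum of f over the feasible set is attained at a matrix of the form F = W·diag(√p_1,…,√p_N), and equals the maximum of Σ_{k=1}^N log(1 + λ_k·p_k) over all p ∈ ℝ^N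 with 0 ≤ p_k ≤ p̄_k and (1/N)·Σ_k p_k ≤ P. (Theorem 1 for the mutual-information game G1: the channel-diagonalizing transmit structure is optimal under both transmit-power and spectral-mask constraints.) -/
open Matrix

namespace DiagOpt

variable {N : ℕ}

/-- Mutual information `f(F) = log det(I + Fᴴ W Λ Wᴴ F)` (the determinant is a positive
real number, and we take its real part). -/
noncomputable def f (W : Matrix (Fin N) (Fin N) ℂ) (lam : Fin N → ℝ)
    (F : Matrix (Fin N) (Fin N) ℂ) : ℝ :=
  Real.log (Matrix.det (1 + Fᴴ * W * Matrix.diagonal (fun k => (lam k : ℂ)) * Wᴴ * F)).re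

/-- Feasibility of a precoder `F`: transmit-power and spectral-mask constraints. -/
def feasible (W : Matrix (Fin N) (Fin N) ℂ) (P : ℝ) (pbar : Fin N → ℝ)
    (F : Matrix (Fin N) (Fin N) ℂ) : Prop :=
  (1 / (N : ℝ)) * (Matrix.trace (F * Fᴴ)).re ≤ P ∧
  ∀ k, ((Wᴴ * F * Fᴴ * W) k k).re ≤ pbar k

/-- The channel-diagonalizing precoder `W · diag(√p₁, …, √p_N)`. -/
noncomputable def diagF (W : Matrix (Fin N) (Fin N) ℂ) (p : Fin N → ℝ) :
    Matrix (Fin N) (Fin N) ℂ :=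
  W * Matrix.diagonal (fun k => (Real.sqrt (p k) : ℂ))

/-- Feasibility of a power vector `p` in the reduced (vector) problem. -/
def vecFeasible (P : ℝ) (pbar : Fin N → ℝ) (p : Fin N → ℝ) : Prop :=
  (∀ k, 0 ≤ p k ∧ p k ≤ pbar k) ∧ (1 / (N : ℝ)) * ∑ k, p k ≤ P

end DiagOpt

/-!
Write `Q = Wᴴ F Fᴴ W`. By the Weinstein–Aronszajn identity `f F = log det (1 + Λ Q)`, and
`det (1 + Λ Q) = det (1 + √Λ Q √Λ)` is the determinant of a positive definite matrix with diagonal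
entries `1 + λ_k p_k`, where `p_k = Q_kk`. Hadamard's inequality bounds it by `∏ (1 + λ_k p_k)`, and
for the diagonalizing precoder `Q` is diagonal, so that the bound is attained. Both constraints
depend on `F` only through `p`, as `tr (F Fᴴ) = tr Q`, and the reduced problem has a solution by
compactness.

For Hadamard's inequality, rescale the matrix to have unit diagonal. Its `n` eigenvalues `μ_i` then
sum to `n`, so that `∏ μ_i ≤ ∏ exp (μ_i - 1) = 1`.
-/

namespace DiagOpt

open scoped ComplexOrder

section Hadamard

variable {𝕜 n : Type*} [RCLike 𝕜] [DecidableEq n]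

lemma conjTranspose_diagonal_ofReal (d : n → ℝ) :
    (diagonal fun i => (d i : 𝕜))ᴴ = diagonal fun i => (d i : 𝕜) := by
  simp [diagonal_conjTranspose, Pi.star_def]

variable [Fintype n] {A : Matrix n n 𝕜}

lemma re_det_le_exp_re_trace_sub_card (hA : A.PosSemidef) :
    RCLike.re A.det ≤ Real.exp (RCLike.re A.trace - Fintype.card n) := by
  have hdet : RCLike.re A.det = ∏ i, hA.1.eigenvalues i := by
    rw [hA.1.det_eq_prod_eigenvalues, ← RCLike.ofReal_prod, RCLike.ofReal_re]
  have htrace : RCLike.re A.trace = ∑ i, hA.1.eigenvalues i := by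
    rw [hA.1.trace_eq_sum_eigenvalues, ← RCLike.ofReal_sum, RCLike.ofReal_re]
  calc RCLike.re A.det = ∏ i, hA.1.eigenvalues i := hdet
    _ ≤ ∏ i, Real.exp (hA.1.eigenvalues i - 1) :=
        Finset.prod_le_prod (fun i _ => hA.eigenvalues_nonneg i) fun i _ => by
          linarith [Real.add_one_le_exp (hA.1.eigenvalues i - 1)]
    _ = Real.exp (RCLike.re A.trace - Fintype.card n) := by
        simp [← Real.exp_sum, Finset.sum_sub_distrib, htrace]

lemma det_le_one_of_trace_eq_card (hA : A.PosSemidef) (htrace : A.trace = Fintype.card n) :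
    A.det ≤ 1 := by
  have hre : RCLike.re A.det ≤ 1 := by
    simpa [htrace] using re_det_le_exp_re_trace_sub_card hA
  exact RCLike.le_iff_re_im.2 ⟨by simpa using hre,
    by simpa using (RCLike.nonneg_iff.1 hA.det_nonneg).2⟩

lemma det_le_prod_diag_of_posDef (hA : A.PosDef) : A.det ≤ ∏ i, A i i := by
  let d : n → ℝ := fun i => (√(RCLike.re (A i i)))⁻¹
  let D : Matrix n n 𝕜 := diagonal fun i => (d i : 𝕜)
  have hd : ∀ i, (d i : 𝕜) * d i * A i i = 1 := fun i => by
    have hpos : 0 < RCLike.re (A i i) := (RCLike.pos_iff.1 hA.diag_pos).1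
    rw [← hA.1.coe_re_apply_self i, ← RCLike.ofReal_mul, ← RCLike.ofReal_mul, ← mul_inv,
      Real.mul_self_sqrt hpos.le, inv_mul_cancel₀ hpos.ne', RCLike.ofReal_one]
  have hDAD : (D * A * D).PosSemidef := by
    simpa only [D, conjTranspose_diagonal_ofReal] using
      hA.posSemidef.conjTranspose_mul_mul_same D
  have hdiag : ∀ i, (D * A * D) i i = 1 := fun i => by
    rw [mul_diagonal, diagonal_mul, mul_right_comm, hd]
  have hdet_le : (D * A * D).det ≤ 1 :=
    det_le_one_of_trace_eq_card hDAD (by simp [Matrix.trace, hdiag])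
  have hprod : (∏ i, (d i : 𝕜)) * (∏ i, (d i : 𝕜)) * ∏ i, A i i = 1 := by
    simp only [← Finset.prod_mul_distrib, hd, Finset.prod_const_one]
  have hdet : A.det = (D * A * D).det * ∏ i, A i i := by
    rw [det_mul, det_mul, det_diagonal]
    linear_combination -A.det * hprod
  rw [hdet]
  exact mul_le_of_le_one_left (Finset.prod_nonneg fun i _ => hA.posSemidef.diag_nonneg) hdet_le

theorem det_le_prod_diag (hA : A.PosSemidef) : A.det ≤ ∏ i, A i i := by
  by_cases hdet : A.det = 0
  · exact hdet ▸ Finset.prod_nonneg fun i _ => hA.diag_nonneg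
  · exact det_le_prod_diag_of_posDef (hA.posDef_iff_det_ne_zero.2 hdet)

variable {a : n → ℝ}

lemma det_one_add_diagonal_mul (ha : ∀ i, 0 ≤ a i) (A : Matrix n n 𝕜) :
    (1 + diagonal (fun i => (a i : 𝕜)) * A).det =
      (1 + diagonal (fun i => (√(a i) : 𝕜)) * A * diagonal fun i => (√(a i) : 𝕜)).det := by
  have hsq : diagonal (fun i => (a i : 𝕜)) =
      diagonal (fun i => (√(a i) : 𝕜)) * diagonal fun i => (√(a i) : 𝕜) := by
    simp only [diagonal_mul_diagonal, ← RCLike.ofReal_mul, Real.mul_self_sqrt (ha _)]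
  rw [hsq, Matrix.mul_assoc, det_one_add_mul_comm]

lemma posDef_one_add_diagonal_mul_mul_diagonal (hA : A.PosSemidef) (s : n → ℝ) :
    (1 + diagonal (fun i => (s i : 𝕜)) * A * diagonal fun i => (s i : 𝕜)).PosDef := by
  refine PosDef.one.add_posSemidef ?_
  simpa only [conjTranspose_diagonal_ofReal] using
    hA.conjTranspose_mul_mul_same (diagonal fun i => (s i : 𝕜))

lemma det_one_add_diagonal_mul_pos (hA : A.PosSemidef) (ha : ∀ i, 0 ≤ a i) :
    0 < (1 + diagonal (fun i => (a i : 𝕜)) * A).det := by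
  rw [det_one_add_diagonal_mul ha]
  exact (posDef_one_add_diagonal_mul_mul_diagonal hA _).det_pos

lemma det_one_add_diagonal_mul_le (hA : A.PosSemidef) (ha : ∀ i, 0 ≤ a i) :
    (1 + diagonal (fun i => (a i : 𝕜)) * A).det ≤ ∏ i, (1 + a i * A i i) := by
  rw [det_one_add_diagonal_mul ha]
  refine (det_le_prod_diag (posDef_one_add_diagonal_mul_mul_diagonal hA _).posSemidef).trans_eq
    (Finset.prod_congr rfl fun i _ => ?_)
  rw [Matrix.add_apply, one_apply_eq, mul_diagonal, diagonal_mul, mul_right_comm,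
    ← RCLike.ofReal_mul, Real.mul_self_sqrt (ha i)]

end Hadamard

variable {N : ℕ} {W F : Matrix (Fin N) (Fin N) ℂ} {lam p pbar : Fin N → ℝ} {P : ℝ}

/-- The transmit covariance `F Fᴴ` expressed in the eigenbasis `W` of the channel. -/
def covariance (W F : Matrix (Fin N) (Fin N) ℂ) : Matrix (Fin N) (Fin N) ℂ :=
  Wᴴ * F * Fᴴ * W

/-- The power that `F` allocates to each channel eigenmode. The diagonal of `covariance W F` is
real, so that taking real parts loses nothing. -/
def power (W F : Matrix (Fin N) (Fin N) ℂ) (k : Fin N) : ℝ :=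
  (covariance W F k k).re

/-- The total rate of parallel channels with gains `lam` under the power allocation `p`: the
objective of the reduced problem. -/
noncomputable def sumRate (lam p : Fin N → ℝ) : ℝ :=
  ∑ k, Real.log (1 + lam k * p k)

lemma posSemidef_covariance (W F : Matrix (Fin N) (Fin N) ℂ) : (covariance W F).PosSemidef := by
  simpa only [covariance, conjTranspose_mul, conjTranspose_conjTranspose, ← Matrix.mul_assoc] using
    posSemidef_self_mul_conjTranspose (Wᴴ * F)

lemma ofReal_power (W F : Matrix (Fin N) (Fin N) ℂ) (k : Fin N) :
    (power W F k : ℂ) = covariance W F k k :=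
  (posSemidef_covariance W F).1.coe_re_apply_self k

lemma power_nonneg (W F : Matrix (Fin N) (Fin N) ℂ) (k : Fin N) : 0 ≤ power W F k :=
  (Complex.nonneg_iff.1 (posSemidef_covariance W F).diag_nonneg).1

lemma covariance_diagF (hW : Wᴴ * W = 1) (hp : ∀ k, 0 ≤ p k) :
    covariance W (diagF W p) = diagonal fun k => (p k : ℂ) := by
  let S : Matrix (Fin N) (Fin N) ℂ := diagonal fun k => (√(p k) : ℂ)
  have hS : Sᴴ = S := conjTranspose_diagonal_ofReal fun k => √(p k)
  calc covariance W (diagF W p) = Wᴴ * W * S * S * (Wᴴ * W) := by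
        simp only [covariance, diagF, conjTranspose_mul, Matrix.mul_assoc]
        rw [hS]
    _ = S * S := by rw [hW, Matrix.one_mul, Matrix.mul_one]
    _ = diagonal fun k => (p k : ℂ) := by
        simp only [S, diagonal_mul_diagonal, ← Complex.ofReal_mul, Real.mul_self_sqrt (hp _)]

lemma power_diagF (hW : Wᴴ * W = 1) (hp : ∀ k, 0 ≤ p k) : power W (diagF W p) = p := by
  funext k
  rw [power, covariance_diagF hW hp, diagonal_apply_eq, Complex.ofReal_re]

lemma re_trace_mul_conjTranspose (hW : Wᴴ * W = 1) (F : Matrix (Fin N) (Fin N) ℂ) :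
    (F * Fᴴ).trace.re = ∑ k, power W F k := by
  have htrace : (covariance W F).trace = (F * Fᴴ).trace := by
    rw [covariance, trace_mul_comm, ← Matrix.mul_assoc, ← Matrix.mul_assoc,
      mul_eq_one_comm.1 hW, Matrix.one_mul]
  rw [← htrace, Matrix.trace, Complex.re_sum]
  rfl

lemma feasible_iff_vecFeasible_power (hW : Wᴴ * W = 1) :
    feasible W P pbar F ↔ vecFeasible P pbar (power W F) := by
  rw [feasible, vecFeasible, re_trace_mul_conjTranspose hW, and_comm]
  exact and_congr_left' (forall_congr' fun k => (and_iff_right (power_nonneg W F k)).symm)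

lemma feasible_diagF (hW : Wᴴ * W = 1) (hp : vecFeasible P pbar p) :
    feasible W P pbar (diagF W p) := by
  rwa [feasible_iff_vecFeasible_power hW, power_diagF hW fun k => (hp.1 k).1]

lemma f_eq_log_det_covariance (W : Matrix (Fin N) (Fin N) ℂ) (lam : Fin N → ℝ)
    (F : Matrix (Fin N) (Fin N) ℂ) :
    f W lam F =
      Real.log (1 + diagonal (fun k => (lam k : ℂ)) * covariance W F).det.re := by
  have hcomm := det_one_add_mul_comm (Fᴴ * W) (diagonal (fun k => (lam k : ℂ)) * Wᴴ * F)
  simp only [f, covariance, ← Matrix.mul_assoc] at hcomm ⊢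
  rw [hcomm]

lemma one_add_mul_pos (hlam : ∀ k, 0 ≤ lam k) (hp : ∀ k, 0 ≤ p k) (k : Fin N) :
    0 < 1 + lam k * p k :=
  add_pos_of_pos_of_nonneg one_pos (mul_nonneg (hlam k) (hp k))

lemma f_diagF (hW : Wᴴ * W = 1) (hlam : ∀ k, 0 ≤ lam k) (hp : ∀ k, 0 ≤ p k) :
    f W lam (diagF W p) = sumRate lam p := by
  have hdiag : 1 + diagonal (fun k => (lam k : ℂ)) * covariance W (diagF W p) =
      diagonal fun k => ((1 + lam k * p k : ℝ) : ℂ) := by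
    rw [covariance_diagF hW hp, diagonal_mul_diagonal, ← diagonal_one, diagonal_add]
    push_cast
    rfl
  rw [f_eq_log_det_covariance, hdiag, det_diagonal, ← Complex.ofReal_prod, Complex.ofReal_re,
    Real.log_prod fun k _ => (one_add_mul_pos hlam hp k).ne', sumRate]

lemma f_le_sumRate_power (W F : Matrix (Fin N) (Fin N) ℂ) (hlam : ∀ k, 0 ≤ lam k) :
    f W lam F ≤ sumRate lam (power W F) := by
  have hQ := posSemidef_covariance W F
  have hpos : 0 < (1 + diagonal (fun k => (lam k : ℂ)) * covariance W F).det :=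
    det_one_add_diagonal_mul_pos hQ hlam
  have hle : (1 + diagonal (fun k => (lam k : ℂ)) * covariance W F).det ≤
      ((∏ k, (1 + lam k * power W F k) : ℝ) : ℂ) := by
    simpa [ofReal_power] using det_one_add_diagonal_mul_le hQ hlam
  rw [f_eq_log_det_covariance, sumRate,
    ← Real.log_prod fun k _ => (one_add_mul_pos hlam (power_nonneg W F) k).ne']
  exact Real.log_le_log (Complex.pos_iff.1 hpos).1 (Complex.le_def.1 hle).1

lemma isCompact_vecFeasible (P : ℝ) (pbar : Fin N → ℝ) :
    IsCompact {p | vecFeasible P pbar p} := by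
  have hinter : {p | vecFeasible P pbar p} =
      Set.Icc 0 pbar ∩ {p | (1 / (N : ℝ)) * ∑ k, p k ≤ P} := by
    ext p
    simp only [vecFeasible, Set.mem_ofPred_eq, Set.mem_inter_iff, Set.mem_Icc, Pi.le_def,
      Pi.zero_apply, forall_and]
  rw [hinter]
  exact isCompact_Icc.inter_right (isClosed_le (by fun_prop) continuous_const)

lemma continuousOn_sumRate (hlam : ∀ k, 0 ≤ lam k) :
    ContinuousOn (sumRate lam) {p | ∀ k, 0 ≤ p k} :=
  continuousOn_finsetSum _ fun k _ =>
    ContinuousOn.log (by fun_prop) fun _ hp => (one_add_mul_pos hlam hp k).ne'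

lemma exists_isMaxOn_sumRate (hlam : ∀ k, 0 ≤ lam k) (hP : 0 ≤ P) (hpbar : ∀ k, 0 ≤ pbar k) :
    ∃ p, vecFeasible P pbar p ∧ IsMaxOn (sumRate lam) {p | vecFeasible P pbar p} p :=
  (isCompact_vecFeasible P pbar).exists_isMaxOn
    ⟨0, fun k => ⟨le_rfl, hpbar k⟩, by simpa using hP⟩
    ((continuousOn_sumRate hlam).mono fun _ hp k => (hp.1 k).1)

lemma isMaxOn_f_diagF (hW : Wᴴ * W = 1) (hlam : ∀ k, 0 ≤ lam k)
    (hp : vecFeasible P pbar p) (hmax : IsMaxOn (sumRate lam) {p | vecFeasible P pbar p} p) :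
    IsMaxOn (f W lam) {F | feasible W P pbar F} (diagF W p) := fun F hF =>
  calc f W lam F ≤ sumRate lam (power W F) := f_le_sumRate_power W F hlam
    _ ≤ sumRate lam p := hmax ((feasible_iff_vecFeasible_power hW).1 hF)
    _ = f W lam (diagF W p) := (f_diagF hW hlam fun k => (hp.1 k).1).symm

end DiagOpt

/-- **Theorem 1 for the mutual-information game `G₁`** (single-user step): the
channel-diagonalizing transmit structure is optimal under both transmit-power and
spectral-mask constraints.  (a) For every feasible `F`, the matrix
`F' = W diag(√p)` with `p_k = [Wᴴ F Fᴴ W]_kk` is feasible and `f(F') ≥ f(F)`;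
(b) the maximum of `f` over the feasible set is attained at a matrix of the form
`W diag(√p)` and equals the maximum of `Σ_k log(1 + λ_k p_k)` over the feasible
power vectors. -/
theorem DiagOpt.diagonalizing_structure_optimal (N : ℕ) (hN : 1 ≤ N)
    (W : Matrix (Fin N) (Fin N) ℂ) (hW : W * Wᴴ = 1 ∧ Wᴴ * W = 1)
    (lam : Fin N → ℝ) (hlam : ∀ k, 0 ≤ lam k)
    (P : ℝ) (hP : 0 < P) (pbar : Fin N → ℝ) (hpbar : ∀ k, 0 ≤ pbar k) :
    (∀ F : Matrix (Fin N) (Fin N) ℂ, DiagOpt.feasible W P pbar F →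
      DiagOpt.feasible W P pbar (DiagOpt.diagF W (fun k => ((Wᴴ * F * Fᴴ * W) k k).re)) ∧
      DiagOpt.f W lam F ≤
        DiagOpt.f W lam (DiagOpt.diagF W (fun k => ((Wᴴ * F * Fᴴ * W) k k).re))) ∧
    (∃ p : Fin N → ℝ, DiagOpt.vecFeasible P pbar p ∧
      IsGreatest (DiagOpt.f W lam '' { F | DiagOpt.feasible W P pbar F })
        (DiagOpt.f W lam (DiagOpt.diagF W p)) ∧
      IsGreatest ((fun p' => ∑ k, Real.log (1 + lam k * p' k)) ''
          { p' | DiagOpt.vecFeasible P pbar p' })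
        (∑ k, Real.log (1 + lam k * p k)) ∧
      DiagOpt.f W lam (DiagOpt.diagF W p) = ∑ k, Real.log (1 + lam k * p k)) := by
  refine ⟨fun F hF => ⟨?_, ?_⟩, ?_⟩
  · exact feasible_diagF hW.2 ((feasible_iff_vecFeasible_power hW.2).1 hF)
  · exact (f_le_sumRate_power W F hlam).trans_eq (f_diagF hW.2 hlam (power_nonneg W F)).symm
  · obtain ⟨p, hp, hmax⟩ := exists_isMaxOn_sumRate hlam hP.le hpbar
    have hmaxF := isMaxOn_f_diagF hW.2 hlam hp hmax
    exact ⟨p, hp,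
      ⟨Set.mem_image_of_mem _ (feasible_diagF hW.2 hp), Set.forall_mem_image.2 hmaxF⟩,
      ⟨Set.mem_image_of_mem _ hp, Set.forall_mem_image.2 hmax⟩,
      f_diagF hW.2 hlam fun k => (hp.1 k).1⟩
end

section
/- In the snr/inr parameterization of game G (no spectral-mask constraints), there exist thresholds ε_rq > 0 (for r ≠ q) and S_q > 0 such that whenever 0 ≤ inr_rq ≤ ε_rq for all r ≠ q and snr_q ≥ S_q for all q, game G admits a unique Nash equilibrium p*, and at this equilibrium p*_q(k) > 0 for every user q and every carrier k (every user transmits over the whole bandwidth). Moreover, for every δ > 0 the thresholds S_q can be chosen large enough that the unique Nash equilibrium additionally satisfies |p*_q(k) − 1| < δ for all q and k (the power allocation tends to be flat). (Proposition 1, low-interference case.) -/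
namespace SnrGame

/-- Strategy set (no spectral-mask constraints): nonnegative powers with average at most `1`. -/
def stratSet (N : ℕ) : Set (Fin N → ℝ) :=
  { p | (∀ k, 0 ≤ p k) ∧ (1 / (N : ℝ)) * ∑ k, p k ≤ 1 }

variable {Q N : ℕ}

/-- Payoff `R_q(p)` of user `q` in the snr/inr parameterization: the channel gains are
`|H_qq(k)|² = snr_q |H̄_qq(k)|²` and `|H_rq(k)|² = inr_rq |H̄_rq(k)|²` for `r ≠ q`. -/
noncomputable def payoff (Hbar : Fin Q → Fin Q → Fin N → ℂ) (Γ : Fin Q → ℝ)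
    (snr : Fin Q → ℝ) (inr : Fin Q → Fin Q → ℝ) (q : Fin Q)
    (p : Fin Q → Fin N → ℝ) : ℝ :=
  (1 / (N : ℝ)) * ∑ k, Real.log (1 +
    (1 / Γ q) * (snr q * ‖Hbar q q k‖ ^ 2 * p q k) /
      (1 + ∑ r ∈ Finset.univ.erase q, inr r q * ‖Hbar r q k‖ ^ 2 * p r k))

/-- `p` is a Nash equilibrium of game `G` in the snr/inr parameterization. -/
def isNE (Hbar : Fin Q → Fin Q → Fin N → ℂ) (Γ : Fin Q → ℝ)
    (snr : Fin Q → ℝ) (inr : Fin Q → Fin Q → ℝ) (p : Fin Q → Fin N → ℝ) : Prop :=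
  (∀ q, p q ∈ stratSet N) ∧
  ∀ q, ∀ pq ∈ stratSet N,
    payoff Hbar Γ snr inr q (Function.update p q pq) ≤ payoff Hbar Γ snr inr q p

end SnrGame

/-!
Against a profile `p`, user `q` faces parallel channels with noise levels
`a_q(k) = Γ_q (1 + ∑_{r ≠ q} inr_rq |H̄_rq(k)|² p_r(k)) / (snr_q |H̄_qq(k)|²)`, and the best
response is waterfilling over `a_q`. For large snr all noise levels are below `1`, so the water
covers every carrier and the best response is the affine expression `1 + mean a_q - a_q(k)`. The
equilibria are therefore the feasible fixed points of an affine map. The Lipschitz constant of this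
map and its distance from the flat profile are both of the order of the noise levels, so for large
snr it is a contraction of the closed feasible set with values close to `1`. Since large snr makes
up for any fixed amount of interference, the interference thresholds can be prescribed arbitrarily.
-/

namespace SnrGame

open Finset Function
open scoped BigOperators NNReal

section Waterfilling

variable {ι : Type*} [Fintype ι] {a x : ι → ℝ}

/-- Average rate of the power allocation `x` over parallel channels with noise levels `a`. -/
noncomputable def rate (a x : ι → ℝ) : ℝ :=
  𝔼 k, Real.log (1 + x k / a k)

/-- Waterfilling of unit mean power over the noise levels `a`, with the water covering every
channel: `1 + 𝔼 j, a j` is the water level. No positive part is taken, so this is a feasible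
allocation only where the noise lies below the water level. -/
noncomputable def waterfill (a : ι → ℝ) (k : ι) : ℝ :=
  1 + 𝔼 j, a j - a k

lemma expect_waterfill [Nonempty ι] (a : ι → ℝ) : 𝔼 k, waterfill a k = 1 := by
  simp only [waterfill, expect_sub_distrib, expect_const univ_nonempty, add_sub_cancel_right]

lemma waterfill_nonneg (ha : ∀ k, a k ∈ Set.Icc 0 1) (k : ι) : 0 ≤ waterfill a k := by
  have hmean : 0 ≤ 𝔼 j, a j := expect_nonneg fun j _ => (ha j).1
  unfold waterfill
  linarith [(ha k).2]

lemma abs_waterfill_sub_one_le {η : ℝ} (ha : ∀ k, a k ∈ Set.Icc 0 η) (k : ι) :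
    |waterfill a k - 1| ≤ η := by
  have hmean_nonneg : 0 ≤ 𝔼 j, a j := expect_nonneg fun j _ => (ha j).1
  have hmean_le : 𝔼 j, a j ≤ η := expect_le ⟨k, mem_univ k⟩ fun j _ => (ha j).2
  rw [waterfill, show 1 + 𝔼 j, a j - a k - 1 = 𝔼 j, a j - a k by ring]
  exact abs_sub_le_of_nonneg_of_le hmean_nonneg hmean_le (ha k).1 (ha k).2

lemma lipschitzWith_waterfill : LipschitzWith 2 (waterfill : (ι → ℝ) → ι → ℝ) := by
  refine LipschitzWith.of_dist_le_mul fun a b => (dist_pi_le_iff (by positivity)).2 fun k => ?_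
  have hcoord : ∀ j, |a j - b j| ≤ dist a b := dist_le_pi_dist a b
  have hmean : |𝔼 j, (a j - b j)| ≤ dist a b :=
    (abs_expect_le _ _).trans (expect_le ⟨k, mem_univ k⟩ fun j _ => hcoord j)
  calc dist (waterfill a k) (waterfill b k)
      = |𝔼 j, (a j - b j) - (a k - b k)| := by
        rw [Real.dist_eq, expect_sub_distrib, waterfill, waterfill]
        ring_nf
    _ ≤ |𝔼 j, (a j - b j)| + |a k - b k| := abs_sub _ _
    _ ≤ 2 * dist a b := by linarith [hcoord k]

lemma expect_log_lt_log {m : ℝ} (hx : ∀ k, 0 < x k) (hmean : 𝔼 k, x k ≤ m) {k : ι}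
    (hk : x k ≠ m) : 𝔼 j, Real.log (x j) < Real.log m := by
  have hne : (univ : Finset ι).Nonempty := ⟨k, mem_univ k⟩
  have hm : 0 < m := (expect_pos (fun j _ => hx j) hne).trans_le hmean
  have htangent : 𝔼 j, Real.log (x j / m) < 𝔼 j, (x j / m - 1) :=
    expect_lt_expect (fun j _ => Real.log_le_sub_one_of_pos (div_pos (hx j) hm))
      ⟨k, mem_univ k, Real.log_lt_sub_one_of_pos (div_pos (hx k) hm)
        (mt (div_eq_one_iff_eq hm.ne').1 hk)⟩
  have hlog : 𝔼 j, Real.log (x j / m) = 𝔼 j, Real.log (x j) - Real.log m := by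
    simp only [Real.log_div (hx _).ne' hm.ne', expect_sub_distrib, expect_const hne]
  have hlinear : 𝔼 j, (x j / m - 1) = (𝔼 j, x j) / m - 1 := by
    rw [expect_sub_distrib, expect_const hne, expect_div]
  have hquot : (𝔼 j, x j) / m ≤ 1 := (div_le_one hm).2 hmean
  linarith

lemma rate_eq_expect_log_sub (ha : ∀ k, 0 < a k) (hx : ∀ k, 0 < a k + x k) :
    rate a x = 𝔼 k, Real.log (a k + x k) - 𝔼 k, Real.log (a k) := by
  rw [rate, ← expect_sub_distrib]
  refine expect_congr rfl fun k _ => ?_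
  rw [← Real.log_div (hx k).ne' (ha k).ne', add_div, div_self (ha k).ne']

lemma rate_lt_rate_waterfill (ha : ∀ k, 0 < a k) (hx : ∀ k, 0 ≤ x k) (hmean : 𝔼 k, x k ≤ 1)
    (hne : x ≠ waterfill a) : rate a x < rate a (waterfill a) := by
  obtain ⟨k, hk⟩ := Function.ne_iff.1 hne
  have hlevel : ∀ j, a j + waterfill a j = 1 + 𝔼 i, a i := fun j => by rw [waterfill]; ring
  have hlevel_pos : 0 < 1 + 𝔼 i, a i :=
    add_pos_of_pos_of_nonneg one_pos (expect_nonneg fun j _ => (ha j).le)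
  have hpos : ∀ j, 0 < a j + x j := fun j => add_pos_of_pos_of_nonneg (ha j) (hx j)
  rw [rate_eq_expect_log_sub ha hpos,
    rate_eq_expect_log_sub ha fun j => (hlevel j).symm ▸ hlevel_pos]
  simp only [hlevel, expect_const (⟨k, mem_univ k⟩ : (univ : Finset ι).Nonempty)]
  refine sub_lt_sub_right (expect_log_lt_log hpos ?_ (k := k) fun h => hk ?_) _
  · rw [expect_add_distrib]
    linarith
  · linarith [hlevel k]

end Waterfilling

section StrategySet

variable {N : ℕ}

lemma mem_stratSet_iff {x : Fin N → ℝ} :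
    x ∈ stratSet N ↔ (∀ k, 0 ≤ x k) ∧ 𝔼 k, x k ≤ 1 := by
  rw [stratSet, Set.mem_ofPred_eq, Fintype.expect_eq_sum_div_card, Fintype.card_fin,
    one_div_mul_eq_div]

lemma isClosed_stratSet : IsClosed (stratSet N) := by
  simp only [stratSet, Set.ofPred_and, Set.ofPred_forall]
  exact (isClosed_iInter fun k => isClosed_le continuous_const (continuous_apply k)).inter
    (isClosed_le (by fun_prop) continuous_const)

lemma le_card_of_mem_stratSet {x : Fin N → ℝ} (hx : x ∈ stratSet N) (k : Fin N) : x k ≤ N := by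
  have hN : (0 : ℝ) < N := Nat.cast_pos.2 k.pos
  have hsum : ∑ j, x j ≤ N := by
    have := hx.2
    rwa [one_div_mul_eq_div, div_le_one hN] at this
  exact (single_le_sum (fun j _ => hx.1 j) (mem_univ k)).trans hsum

lemma one_mem_stratSet [NeZero N] : 1 ∈ stratSet N :=
  mem_stratSet_iff.2 ⟨fun _ => zero_le_one, (expect_const univ_nonempty 1).le⟩

lemma waterfill_mem_stratSet [NeZero N] {a : Fin N → ℝ} (ha : ∀ k, a k ∈ Set.Icc 0 1) :
    waterfill a ∈ stratSet N :=
  mem_stratSet_iff.2 ⟨waterfill_nonneg ha, (expect_waterfill a).le⟩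

lemma isMaxOn_rate_iff [NeZero N] {a x : Fin N → ℝ} (ha : ∀ k, a k ∈ Set.Ioc 0 1)
    (hx : x ∈ stratSet N) : IsMaxOn (rate a) (stratSet N) x ↔ waterfill a = x := by
  have hlt : ∀ y ∈ stratSet N, y ≠ waterfill a → rate a y < rate a (waterfill a) := fun y hy =>
    rate_lt_rate_waterfill (fun k => (ha k).1) hy.1 (mem_stratSet_iff.1 hy).2
  constructor
  · intro hmax
    by_contra hne
    exact (hlt x hx (Ne.symm hne)).not_ge
      (hmax (waterfill_mem_stratSet fun k => Set.Ioc_subset_Icc_self (ha k)))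
  · rintro rfl y hy
    obtain rfl | hne := eq_or_ne y (waterfill a)
    · exact le_refl (rate a (waterfill a))
    · exact (hlt y hy hne).le

end StrategySet

section Game

variable {Q N : ℕ}

/-- The strategy profiles of the game: every user respects the power budget. -/
def stratProfiles (Q N : ℕ) : Set (Fin Q → Fin N → ℝ) :=
  Set.univ.pi fun _ => stratSet N

/-- Noise plus interference of user `q` on carrier `k`, scaled by the gap and the direct gain so
that the payoff becomes the rate of `p q` over these noise levels. -/
noncomputable def noise (Hbar : Fin Q → Fin Q → Fin N → ℂ) (Γ snr : Fin Q → ℝ)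
    (inr : Fin Q → Fin Q → ℝ) (p : Fin Q → Fin N → ℝ) (q : Fin Q) (k : Fin N) : ℝ :=
  Γ q * (1 + ∑ r ∈ univ.erase q, inr r q * ‖Hbar r q k‖ ^ 2 * p r k) /
    (snr q * ‖Hbar q q k‖ ^ 2)

/-- Simultaneous full-band waterfilling of all users. It is the best-response map only where the
noise levels lie in `(0, 1]`, but is defined, and affine, on all profiles. -/
noncomputable def bestResponse (Hbar : Fin Q → Fin Q → Fin N → ℂ) (Γ snr : Fin Q → ℝ)
    (inr : Fin Q → Fin Q → ℝ) (p : Fin Q → Fin N → ℝ) (q : Fin Q) : Fin N → ℝ :=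
  waterfill (noise Hbar Γ snr inr p q)

variable {Hbar : Fin Q → Fin Q → Fin N → ℂ} {Γ snr : Fin Q → ℝ} {inr : Fin Q → Fin Q → ℝ}
  {p : Fin Q → Fin N → ℝ}

lemma mem_stratProfiles_iff : p ∈ stratProfiles Q N ↔ ∀ q, p q ∈ stratSet N :=
  Set.mem_univ_pi

lemma payoff_update (p : Fin Q → Fin N → ℝ) (q : Fin Q) (x : Fin N → ℝ) :
    payoff Hbar Γ snr inr q (update p q x) = rate (noise Hbar Γ snr inr p q) x := by
  rw [payoff, rate, Fintype.expect_eq_sum_div_card, Fintype.card_fin, one_div_mul_eq_div]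
  congr 1
  refine sum_congr rfl fun k _ => ?_
  have hinterference : ∑ r ∈ univ.erase q, inr r q * ‖Hbar r q k‖ ^ 2 * update p q x r k =
      ∑ r ∈ univ.erase q, inr r q * ‖Hbar r q k‖ ^ 2 * p r k :=
    sum_congr rfl fun r hr => by rw [update_of_ne (ne_of_mem_erase hr)]
  rw [hinterference, update_self, noise, div_div_eq_mul_div, one_div_mul_eq_div, div_div,
    mul_comm (x k)]

lemma isNE_iff_isMaxOn : isNE Hbar Γ snr inr p ↔ p ∈ stratProfiles Q N ∧
    ∀ q, IsMaxOn (rate (noise Hbar Γ snr inr p q)) (stratSet N) (p q) := by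
  have hself : ∀ q, payoff Hbar Γ snr inr q p = rate (noise Hbar Γ snr inr p q) (p q) := fun q => by
    rw [← payoff_update, update_eq_self]
  simp only [isNE, mem_stratProfiles_iff, isMaxOn_iff, payoff_update, hself]

lemma isNE_iff_isFixedPt [NeZero N]
    (hnoise : ∀ p ∈ stratProfiles Q N, ∀ q k, noise Hbar Γ snr inr p q k ∈ Set.Ioc 0 1) :
    isNE Hbar Γ snr inr p ↔
      p ∈ stratProfiles Q N ∧ IsFixedPt (bestResponse Hbar Γ snr inr) p := by
  rw [isNE_iff_isMaxOn, IsFixedPt, funext_iff]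
  exact and_congr_right fun hp => forall_congr' fun q =>
    isMaxOn_rate_iff (hnoise p hp q) (mem_stratProfiles_iff.1 hp q)

lemma lipschitzWith_bestResponse {K : ℝ≥0} (hL : LipschitzWith K (noise Hbar Γ snr inr)) :
    LipschitzWith (2 * K) (bestResponse Hbar Γ snr inr) := by
  refine LipschitzWith.of_dist_le_mul fun p p' => (dist_pi_le_iff (by positivity)).2 fun q => ?_
  calc dist (bestResponse Hbar Γ snr inr p q) (bestResponse Hbar Γ snr inr p' q)
      ≤ (2 : ℝ≥0) * dist (noise Hbar Γ snr inr p q) (noise Hbar Γ snr inr p' q) :=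
        lipschitzWith_waterfill.dist_le_mul (noise Hbar Γ snr inr p q) (noise Hbar Γ snr inr p' q)
    _ ≤ (2 : ℝ≥0) * (K * dist p p') :=
        mul_le_mul_of_nonneg_left ((dist_le_pi_dist _ _ q).trans (hL.dist_le_mul p p'))
          NNReal.zero_le_coe
    _ = ↑(2 * K) * dist p p' := by rw [NNReal.coe_mul, mul_assoc]

lemma mapsTo_bestResponse [NeZero N]
    (hnoise : ∀ p ∈ stratProfiles Q N, ∀ q k, noise Hbar Γ snr inr p q k ∈ Set.Icc 0 1) :
    Set.MapsTo (bestResponse Hbar Γ snr inr) (stratProfiles Q N) (stratProfiles Q N) :=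
  fun p hp => mem_stratProfiles_iff.2 fun q => waterfill_mem_stratSet (hnoise p hp q)

lemma existsUnique_isNE [NeZero N] {K : ℝ≥0} (hK : 2 * K < 1)
    (hL : LipschitzWith K (noise Hbar Γ snr inr))
    (hnoise : ∀ p ∈ stratProfiles Q N, ∀ q k, noise Hbar Γ snr inr p q k ∈ Set.Ioc 0 1) :
    ∃! p, isNE Hbar Γ snr inr p := by
  have hcontr : ContractingWith (2 * K) (bestResponse Hbar Γ snr inr) :=
    ⟨hK, lipschitzWith_bestResponse hL⟩
  have hmaps := mapsTo_bestResponse fun p hp q k => Set.Ioc_subset_Icc_self (hnoise p hp q k)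
  have hclosed : IsClosed (stratProfiles Q N) := isClosed_set_pi fun _ _ => isClosed_stratSet
  have hflat : 1 ∈ stratProfiles Q N := mem_stratProfiles_iff.2 fun _ => one_mem_stratSet
  obtain ⟨p, hp, hfix, -⟩ := ContractingWith.exists_fixedPoint' hclosed.isComplete
    hmaps (hcontr.restrict hmaps) hflat (edist_ne_top _ _)
  exact ⟨p, (isNE_iff_isFixedPt hnoise).2 ⟨hp, hfix⟩, fun p' hp' =>
    hcontr.fixedPoint_unique' ((isNE_iff_isFixedPt hnoise).1 hp').2 hfix⟩

lemma abs_sub_one_le_of_isFixedPt {η : ℝ} (hfix : IsFixedPt (bestResponse Hbar Γ snr inr) p)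
    (hnoise : ∀ q k, noise Hbar Γ snr inr p q k ∈ Set.Icc 0 η) (q : Fin Q) (k : Fin N) :
    |p q k - 1| ≤ η := by
  rw [← hfix]
  exact abs_waterfill_sub_one_le (hnoise q) k

lemma noise_pos {q : Fin Q} {k : Fin N} (hH : Hbar q q k ≠ 0) (hΓ : 0 < Γ q) (hsnr : 0 < snr q)
    (hinr : ∀ r, r ≠ q → 0 ≤ inr r q) (hp : ∀ r, 0 ≤ p r k) :
    0 < noise Hbar Γ snr inr p q k := by
  have hinterference : 0 ≤ ∑ r ∈ univ.erase q, inr r q * ‖Hbar r q k‖ ^ 2 * p r k :=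
    sum_nonneg fun r hr =>
      mul_nonneg (mul_nonneg (hinr r (ne_of_mem_erase hr)) (sq_nonneg _)) (hp r)
  exact div_pos (mul_pos hΓ (by positivity)) (mul_pos hsnr (by positivity))

lemma noise_le_noise {q : Fin Q} {k : Fin N} (hΓ : 0 ≤ Γ q) (hsnr : 0 ≤ snr q)
    {inr' : Fin Q → Fin Q → ℝ} (hinr : ∀ r, r ≠ q → 0 ≤ inr r q ∧ inr r q ≤ inr' r q)
    {p' : Fin Q → Fin N → ℝ} (hp : ∀ r, 0 ≤ p r k ∧ p r k ≤ p' r k) :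
    noise Hbar Γ snr inr p q k ≤ noise Hbar Γ snr inr' p' q k := by
  have hsum : ∑ r ∈ univ.erase q, inr r q * ‖Hbar r q k‖ ^ 2 * p r k ≤
      ∑ r ∈ univ.erase q, inr' r q * ‖Hbar r q k‖ ^ 2 * p' r k := by
    refine sum_le_sum fun r hr => ?_
    obtain ⟨hinr_nonneg, hinr_le⟩ := hinr r (ne_of_mem_erase hr)
    exact mul_le_mul (mul_le_mul_of_nonneg_right hinr_le (sq_nonneg _)) (hp r).2 (hp r).1
      (mul_nonneg (hinr_nonneg.trans hinr_le) (sq_nonneg _))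
  unfold noise
  gcongr

lemma noise_eq_div_snr (q : Fin Q) (k : Fin N) :
    noise Hbar Γ snr inr p q k = noise Hbar Γ 1 inr p q k / snr q := by
  rw [noise, noise, Pi.one_apply, one_mul, div_div, mul_comm (snr q)]

lemma abs_noise_sub_noise_le {q : Fin Q} (hΓ : 0 ≤ Γ q) (hsnr : 0 ≤ snr q)
    (hinr : ∀ r, r ≠ q → 0 ≤ inr r q) (p p' : Fin Q → Fin N → ℝ) (k : Fin N) :
    |noise Hbar Γ snr inr p q k - noise Hbar Γ snr inr p' q k| ≤
      noise Hbar Γ snr inr 1 q k * dist p p' := by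
  have hcoord : ∀ r, |p r k - p' r k| ≤ dist p p' := fun r =>
    (dist_le_pi_dist (p r) (p' r) k).trans (dist_le_pi_dist p p' r)
  have hsum : |∑ r ∈ univ.erase q, inr r q * ‖Hbar r q k‖ ^ 2 * (p r k - p' r k)| ≤
      (1 + ∑ r ∈ univ.erase q, inr r q * ‖Hbar r q k‖ ^ 2) * dist p p' := by
    rw [add_mul, one_mul, sum_mul]
    refine (abs_sum_le_sum_abs _ _).trans
      (le_add_of_nonneg_of_le dist_nonneg (sum_le_sum fun r hr => ?_))
    have hcoeff : 0 ≤ inr r q * ‖Hbar r q k‖ ^ 2 :=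
      mul_nonneg (hinr r (ne_of_mem_erase hr)) (sq_nonneg _)
    rw [abs_mul, abs_of_nonneg hcoeff]
    exact mul_le_mul_of_nonneg_left (hcoord r) hcoeff
  have hscale : 0 ≤ Γ q / (snr q * ‖Hbar q q k‖ ^ 2) :=
    div_nonneg hΓ (mul_nonneg hsnr (sq_nonneg _))
  calc |noise Hbar Γ snr inr p q k - noise Hbar Γ snr inr p' q k|
      = |Γ q / (snr q * ‖Hbar q q k‖ ^ 2) *
          ∑ r ∈ univ.erase q, inr r q * ‖Hbar r q k‖ ^ 2 * (p r k - p' r k)| := by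
        simp only [noise, mul_sub, sum_sub_distrib]
        ring_nf
    _ ≤ Γ q / (snr q * ‖Hbar q q k‖ ^ 2) *
          ((1 + ∑ r ∈ univ.erase q, inr r q * ‖Hbar r q k‖ ^ 2) * dist p p') := by
        rw [abs_mul, abs_of_nonneg hscale]
        exact mul_le_mul_of_nonneg_left hsum hscale
    _ = noise Hbar Γ snr inr 1 q k * dist p p' := by
        simp only [noise, Pi.one_apply, mul_one]
        ring

lemma lipschitzWith_noise (hΓ : ∀ q, 0 ≤ Γ q) (hsnr : ∀ q, 0 ≤ snr q)
    (hinr : ∀ r q, r ≠ q → 0 ≤ inr r q) {K : ℝ≥0}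
    (hK : ∀ q k, noise Hbar Γ snr inr 1 q k ≤ K) :
    LipschitzWith K (noise Hbar Γ snr inr) :=
  LipschitzWith.of_dist_le_mul fun p p' =>
    (dist_pi_le_iff (by positivity)).2 fun q => (dist_pi_le_iff (by positivity)).2 fun k =>
      (abs_noise_sub_noise_le (hΓ q) (hsnr q) (fun r => hinr r q) p p' k).trans
        (mul_le_mul_of_nonneg_right (hK q k) dist_nonneg)

lemma exists_pos_forall_div_le {ι : Type*} [Finite ι] (B : ι → ℝ) {η : ℝ} (hη : 0 < η) :
    ∃ S > 0, ∀ s ≥ S, ∀ k, B k / s ≤ η := by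
  have hsmall : ∀ᶠ s in Filter.atTop, ∀ k, B k / s ≤ η := Filter.eventually_all.2 fun k =>
    (Filter.Tendsto.const_div_atTop Filter.tendsto_id (B k)).eventually_le_const hη
  obtain ⟨S, hS⟩ := Filter.eventually_atTop.1 hsmall
  exact ⟨max S 1, lt_max_of_lt_right one_pos, fun s hs => hS s ((le_max_left S 1).trans hs)⟩

lemma exists_snr_forall_noise_mem_Ioc (hH : ∀ q k, Hbar q q k ≠ 0) (hΓ : ∀ q, 0 < Γ q)
    (ε : Fin Q → Fin Q → ℝ) {η : ℝ} (hη : 0 < η) :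
    ∃ S : Fin Q → ℝ, (∀ q, 0 < S q) ∧ ∀ (snr : Fin Q → ℝ) (inr : Fin Q → Fin Q → ℝ),
      (∀ q, S q ≤ snr q) → (∀ r q, r ≠ q → 0 ≤ inr r q ∧ inr r q ≤ ε r q) →
      ∀ p ∈ stratProfiles Q N, ∀ q k, noise Hbar Γ snr inr p q k ∈ Set.Ioc 0 η := by
  choose S hS_pos hS using fun q =>
    exists_pos_forall_div_le (noise Hbar Γ 1 ε (fun _ _ => (N : ℝ)) q) hη
  refine ⟨S, hS_pos, fun snr inr hsnr hinr p hp q k => ?_⟩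
  have hsnr_pos : ∀ q, 0 < snr q := fun q => (hS_pos q).trans_le (hsnr q)
  have hstrat := mem_stratProfiles_iff.1 hp
  refine ⟨noise_pos (hH q k) (hΓ q) (hsnr_pos q) (fun r h => (hinr r q h).1)
    fun r => (hstrat r).1 k, ?_⟩
  calc noise Hbar Γ snr inr p q k
      ≤ noise Hbar Γ snr ε (fun _ _ => (N : ℝ)) q k :=
        noise_le_noise (hΓ q).le (hsnr_pos q).le (fun r => hinr r q)
          fun r => ⟨(hstrat r).1 k, le_card_of_mem_stratSet (hstrat r) k⟩
    _ = noise Hbar Γ 1 ε (fun _ _ => (N : ℝ)) q k / snr q := noise_eq_div_snr q k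
    _ ≤ η := hS q (snr q) (hsnr q) k

end Game

theorem low_interference_general {Q N : ℕ} [NeZero N]
    (Hbar : Fin Q → Fin Q → Fin N → ℂ) (hH : ∀ q k, Hbar q q k ≠ 0)
    (Γ : Fin Q → ℝ) (hΓ : ∀ q, 0 < Γ q) (ε : Fin Q → Fin Q → ℝ) {δ : ℝ} (hδ : 0 < δ) :
    ∃ S : Fin Q → ℝ, (∀ q, 0 < S q) ∧
      ∀ (snr : Fin Q → ℝ) (inr : Fin Q → Fin Q → ℝ),
        (∀ q, S q ≤ snr q) →
        (∀ r q, r ≠ q → 0 ≤ inr r q ∧ inr r q ≤ ε r q) →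
        (∃! p : Fin Q → Fin N → ℝ, isNE Hbar Γ snr inr p) ∧
        ∀ p : Fin Q → Fin N → ℝ, isNE Hbar Γ snr inr p →
          (∀ q k, 0 < p q k) ∧ ∀ q k, |p q k - 1| < δ := by
  obtain ⟨η, hη_pos, hη⟩ := exists_between (lt_min (by norm_num : (0 : ℝ) < 1 / 4) hδ)
  obtain ⟨hη_quarter, hηδ⟩ := lt_min_iff.1 hη
  obtain ⟨S, hS, hnoise⟩ := exists_snr_forall_noise_mem_Ioc hH hΓ ε hη_pos
  refine ⟨S, hS, fun snr inr hsnr hinr => ?_⟩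
  have hnoise := hnoise snr inr hsnr hinr
  have hnoise_one : ∀ p ∈ stratProfiles Q N, ∀ q k, noise Hbar Γ snr inr p q k ∈ Set.Ioc 0 1 :=
    fun p hp q k => Set.Ioc_subset_Ioc_right (by linarith) (hnoise p hp q k)
  have hlip : LipschitzWith (1 / 4) (noise Hbar Γ snr inr) :=
    lipschitzWith_noise (fun q => (hΓ q).le) (fun q => ((hS q).trans_le (hsnr q)).le)
      (fun r q h => (hinr r q h).1) fun q k => by
        have hflat := (hnoise 1 (mem_stratProfiles_iff.2 fun _ => one_mem_stratSet) q k).2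
        push_cast
        linarith
  refine ⟨existsUnique_isNE (by rw [← NNReal.coe_lt_coe]; norm_num) hlip hnoise_one,
    fun p hNE => ?_⟩
  obtain ⟨hp, hfix⟩ := (isNE_iff_isFixedPt hnoise_one).1 hNE
  have hdist := abs_sub_one_le_of_isFixedPt hfix fun q k =>
    Set.Ioc_subset_Icc_self (hnoise p hp q k)
  exact ⟨fun q k => by linarith [(abs_le.1 (hdist q k)).1], fun q k => (hdist q k).trans_lt hηδ⟩

end SnrGame

/-- **Proposition 1 (low-interference case).** There exist thresholds `ε_rq > 0` (`r ≠ q`)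
and `S_q > 0` such that whenever `0 ≤ inr_rq ≤ ε_rq` and `snr_q ≥ S_q`, game `G` admits a
unique Nash equilibrium, at which every user transmits over the whole bandwidth
(`p*_q(k) > 0` for all `q, k`). Moreover, for every `δ > 0` the thresholds `S_q` can be
chosen large enough that additionally `|p*_q(k) − 1| < δ` for all `q, k` (the power
allocation tends to be flat). -/
theorem SnrGame.low_interference (Q N : ℕ) (hQ : 1 ≤ Q) (hN : 1 ≤ N)
    (Hbar : Fin Q → Fin Q → Fin N → ℂ) (hH : ∀ q k, Hbar q q k ≠ 0)
    (Γ : Fin Q → ℝ) (hΓ : ∀ q, 1 ≤ Γ q) :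
    (∃ ε : Fin Q → Fin Q → ℝ, ∃ S : Fin Q → ℝ,
      (∀ r q, r ≠ q → 0 < ε r q) ∧ (∀ q, 0 < S q) ∧
      ∀ (snr : Fin Q → ℝ) (inr : Fin Q → Fin Q → ℝ),
        (∀ q, S q ≤ snr q) →
        (∀ r q, r ≠ q → 0 ≤ inr r q ∧ inr r q ≤ ε r q) →
        (∃! p : Fin Q → Fin N → ℝ, SnrGame.isNE Hbar Γ snr inr p) ∧
        ∀ p : Fin Q → Fin N → ℝ, SnrGame.isNE Hbar Γ snr inr p →
          ∀ q k, 0 < p q k) ∧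
    (∀ δ : ℝ, 0 < δ →
      ∃ ε : Fin Q → Fin Q → ℝ, ∃ S : Fin Q → ℝ,
        (∀ r q, r ≠ q → 0 < ε r q) ∧ (∀ q, 0 < S q) ∧
        ∀ (snr : Fin Q → ℝ) (inr : Fin Q → Fin Q → ℝ),
          (∀ q, S q ≤ snr q) →
          (∀ r q, r ≠ q → 0 ≤ inr r q ∧ inr r q ≤ ε r q) →
          (∃! p : Fin Q → Fin N → ℝ, SnrGame.isNE Hbar Γ snr inr p) ∧
          ∀ p : Fin Q → Fin N → ℝ, SnrGame.isNE Hbar Γ snr inr p →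
            (∀ q k, 0 < p q k) ∧ ∀ q k, |p q k - 1| < δ) := by
  have : NeZero N := ⟨Nat.one_le_iff_ne_zero.1 hN⟩
  choose S hS h using fun (δ : ℝ) (hδ : 0 < δ) =>
    low_interference_general Hbar hH Γ (fun q => one_pos.trans_le (hΓ q)) 1 hδ
  exact ⟨⟨1, S 1 one_pos, fun _ _ _ => one_pos, hS 1 one_pos, fun snr inr hsnr hinr =>
      (h 1 one_pos snr inr hsnr hinr).imp_right fun hp p hNE => (hp p hNE).1⟩,
    fun δ hδ => ⟨1, S δ hδ, fun _ _ _ => one_pos, hS δ hδ, h δ hδ⟩⟩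
end

section
/- In the snr/inr parameterization of game G (no spectral-mask constraints), let p* be a Nash equilibrium whose supports I_q = { k : p*_q(k) > 0 } are pairwise disjoint across users and which uses full power: (1/N)·Σ_{k=1}^N p*_q(k) = 1 for every q. Suppose that Γ_q·inr_qr·|H̄_qr(k)|² ≤ snr_q·|H̄_qq(k)|² for every q, every r ≠ q, and every k ∈ I_q. Then the subcarriers are allocated according to: for all q ≠ r, all k_r ∈ I_r and all k_q ∈ I_q, |H̄_rr(k_r)|²/|H̄_qq(k_r)|² ≥ |H̄_rr(k_q)|²/|H̄_qq(k_q)|². (Proposition 2, subcarrier-allocation rule at orthogonal Nash equilibria.) -/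
/-!
At a best response, moving a little power from a used carrier to any other carrier does not increase
the rate, so the marginal rates of user `q`, namely `a_q(k) / (n_q(k) + a_q(k) p_q(k))` with `a_q`
the effective gain and `n_q` the noise level, are largest on the carriers `q` uses. Suppose `q` is
alone on `k_q` and `r` is alone on `k_r`, and put `X = 1 + a_q(k_q) p_q(k_q)` and
`Y = 1 + a_r(k_r) p_r(k_r)`. The noise level of `q` on `k_r` comes from `r` only and is at most `Y`,
so `a_q(k_r) / Y ≤ a_q(k_q) / X`. By symmetry `a_r(k_q) / X ≤ a_r(k_r) / Y`, and in the product of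
the two inequalities `X` and `Y` cancel.
-/

namespace SnrGame

open Finset

section FirstOrder

variable {ι : Type*} [Fintype ι] {x : ι → ℝ} {i : ι}

theorem segment_add_transfer_subset [DecidableEq ι] (hx : ∀ k, 0 ≤ x k) (i j : ι) :
    segment ℝ x (x + (Pi.single j (x i) - Pi.single i (x i))) ⊆
      {y | (∀ k, 0 ≤ y k) ∧ ∑ k, y k = ∑ k, x k} := by
  have hconvex : Convex ℝ {y : ι → ℝ | (∀ k, 0 ≤ y k) ∧ ∑ k, y k = ∑ k, x k} := by
    rintro y ⟨hy, hysum⟩ z ⟨hz, hzsum⟩ a b ha hb hab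
    refine ⟨fun k ↦ add_nonneg (mul_nonneg ha (hy k)) (mul_nonneg hb (hz k)), ?_⟩
    simp [sum_add_distrib, ← mul_sum, hysum, hzsum, ← add_mul, hab]
  refine hconvex.segment_subset ⟨hx, rfl⟩ ⟨fun k ↦ ?_, by simp [sum_add_distrib]⟩
  have hremoved : (Pi.single i (x i) : ι → ℝ) k ≤ x k := by
    obtain rfl | hk := eq_or_ne k i
    · rw [Pi.single_eq_same]
    · rw [Pi.single_eq_of_ne hk]
      exact hx k
  have hadded : (0 : ι → ℝ) ≤ Pi.single j (x i) := Pi.single_nonneg.2 (hx i)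
  calc
    0 ≤ x k - (Pi.single i (x i) : ι → ℝ) k + (Pi.single j (x i) : ι → ℝ) k :=
      add_nonneg (sub_nonneg.2 hremoved) (hadded k)
    _ = _ := by
      simp only [Pi.add_apply, Pi.sub_apply]
      ring

theorem deriv_le_deriv_of_isLocalMaxOn_sum {f : ι → ℝ → ℝ} {f' : ι → ℝ}
    (hx : ∀ k, 0 ≤ x k) (hf : ∀ k, HasDerivAt (f k) (f' k) (x k))
    (hmax : IsLocalMaxOn (fun y ↦ ∑ k, f k (y k))
      {y | (∀ k, 0 ≤ y k) ∧ ∑ k, y k = ∑ k, x k} x)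
    (hi : 0 < x i) (j : ι) : f' j ≤ f' i := by
  classical
  have hderiv : HasFDerivAt (fun y : ι → ℝ ↦ ∑ k, f k (y k))
      (∑ k, f' k • ContinuousLinearMap.proj (R := ℝ) (φ := fun _ : ι ↦ ℝ) k) x :=
    HasFDerivAt.fun_sum fun k _ ↦ (hf k).comp_hasFDerivAt x (hasFDerivAt_apply k x)
  have hnonpos := hmax.hasFDerivWithinAt_nonpos hderiv.hasFDerivWithinAt
    (mem_posTangentConeAt_of_segment_subset (segment_add_transfer_subset hx i j))
  have htransfer : (f' j - f' i) * x i ≤ 0 := by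
    simpa [mul_sub, sub_mul, Pi.single_apply] using hnonpos
  exact sub_nonpos.1 (nonpos_of_mul_nonpos_left htransfer hi)

end FirstOrder

theorem hasDerivAt_log_one_add_mul_div {a n x : ℝ} (hn : n ≠ 0) (hx : n + a * x ≠ 0) :
    HasDerivAt (fun t ↦ Real.log (1 + a * t / n)) (a / (n + a * x)) x := by
  have hne : 1 + a * x / n ≠ 0 := by
    rw [one_add_div hn]
    exact div_ne_zero hx hn
  convert ((((hasDerivAt_id' x).const_mul a).div_const n).const_add 1).log hne using 1
  field_simp

/-- The gain of user `q` on carrier `k` relative to unit noise, reduced by the gap: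
`|H_qq(k)|² / Γ_q`. -/
noncomputable def effectiveGain (Hbar : Fin Q → Fin Q → Fin N → ℂ) (Γ snr : Fin Q → ℝ)
    (q : Fin Q) (k : Fin N) : ℝ :=
  snr q * ‖Hbar q q k‖ ^ 2 / Γ q

/-- The power of noise plus interference that user `q` sees on carrier `k`. It does not depend on
`p q`. -/
noncomputable def noiseLevel (Hbar : Fin Q → Fin Q → Fin N → ℂ) (inr : Fin Q → Fin Q → ℝ)
    (p : Fin Q → Fin N → ℝ) (q : Fin Q) (k : Fin N) : ℝ :=
  1 + ∑ r ∈ univ.erase q, inr r q * ‖Hbar r q k‖ ^ 2 * p r k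

/-- The strategy `p q` is feasible and maximizes the payoff of user `q` against the strategies of
the other users in `p`. -/
def IsBestResponse (Hbar : Fin Q → Fin Q → Fin N → ℂ) (Γ snr : Fin Q → ℝ)
    (inr : Fin Q → Fin Q → ℝ) (p : Fin Q → Fin N → ℝ) (q : Fin Q) : Prop :=
  p q ∈ stratSet N ∧
    IsMaxOn (fun y ↦ payoff Hbar Γ snr inr q (Function.update p q y)) (stratSet N) (p q)

/-- User `q` transmits on carrier `k` and nobody else does. -/
def IsSoleUser (p : Fin Q → Fin N → ℝ) (q : Fin Q) (k : Fin N) : Prop :=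
  0 < p q k ∧ ∀ s ≠ q, p s k = 0

variable {Hbar : Fin Q → Fin Q → Fin N → ℂ} {Γ snr : Fin Q → ℝ} {inr : Fin Q → Fin Q → ℝ}
  {p : Fin Q → Fin N → ℝ} {q r : Fin Q} {i k : Fin N}

theorem isNE.isBestResponse (hNE : isNE Hbar Γ snr inr p) (q : Fin Q) :
    IsBestResponse Hbar Γ snr inr p q :=
  ⟨hNE.1 q, fun y hy ↦ by simpa using hNE.2 q y hy⟩

theorem isSoleUser_of_orthogonal (hp : ∀ s k, 0 ≤ p s k)
    (horth : ∀ q r, q ≠ r → ∀ k, ¬(0 < p q k ∧ 0 < p r k)) (hq : 0 < p q k) :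
    IsSoleUser p q k :=
  ⟨hq, fun s hs ↦ (hp s k).eq_of_not_lt' fun h ↦ horth s q hs k ⟨h, hq⟩⟩

theorem effectiveGain_nonneg (hΓ : 0 ≤ Γ q) (hsnr : 0 ≤ snr q) (k : Fin N) :
    0 ≤ effectiveGain Hbar Γ snr q k := by
  unfold effectiveGain
  positivity

theorem noiseLevel_pos (hinr : ∀ s ≠ q, 0 ≤ inr s q) (hp : ∀ s ≠ q, 0 ≤ p s k) :
    0 < noiseLevel Hbar inr p q k := by
  refine add_pos_of_pos_of_nonneg one_pos (sum_nonneg fun s hs ↦ ?_)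
  have hsq := ne_of_mem_erase hs
  exact mul_nonneg (mul_nonneg (hinr s hsq) (sq_nonneg _)) (hp s hsq)

theorem payoff_update_s12 (y : Fin N → ℝ) :
    payoff Hbar Γ snr inr q (Function.update p q y) = 1 / (N : ℝ) *
      ∑ k, Real.log (1 + effectiveGain Hbar Γ snr q k * y k / noiseLevel Hbar inr p q k) := by
  have hothers (k : Fin N) :
      ∑ s ∈ univ.erase q, inr s q * ‖Hbar s q k‖ ^ 2 * Function.update p q y s k =
        ∑ s ∈ univ.erase q, inr s q * ‖Hbar s q k‖ ^ 2 * p s k :=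
    sum_congr rfl fun s hs ↦ by rw [Function.update_of_ne (ne_of_mem_erase hs)]
  simp only [payoff, effectiveGain, noiseLevel, hothers, Function.update_self]
  congr! 4
  ring

theorem IsBestResponse.isMaxOn_sum_log (h : IsBestResponse Hbar Γ snr inr p q) (hN : 0 < N) :
    IsMaxOn (fun y ↦ ∑ k, Real.log
      (1 + effectiveGain Hbar Γ snr q k * y k / noiseLevel Hbar inr p q k))
      (stratSet N) (p q) := by
  have hN' : (0 : ℝ) < 1 / N := one_div_pos.2 (Nat.cast_pos.2 hN)
  intro y hy
  have hle := h.2 hy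
  simp only [Set.mem_ofPred_eq, payoff_update_s12] at hle
  exact le_of_mul_le_mul_left hle hN'

theorem IsBestResponse.gain_div_le_of_pos (h : IsBestResponse Hbar Γ snr inr p q)
    (hΓ : 0 ≤ Γ q) (hsnr : 0 ≤ snr q) (hinr : ∀ s ≠ q, 0 ≤ inr s q)
    (hp : ∀ s ≠ q, ∀ k, 0 ≤ p s k) (hi : 0 < p q i) (j : Fin N) :
    effectiveGain Hbar Γ snr q j /
        (noiseLevel Hbar inr p q j + effectiveGain Hbar Γ snr q j * p q j) ≤
      effectiveGain Hbar Γ snr q i /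
        (noiseLevel Hbar inr p q i + effectiveGain Hbar Γ snr q i * p q i) := by
  have hnoise (k : Fin N) : 0 < noiseLevel Hbar inr p q k :=
    noiseLevel_pos hinr fun s hs ↦ hp s hs k
  have hderiv (k : Fin N) := hasDerivAt_log_one_add_mul_div (hnoise k).ne' <| ne_of_gt <|
    add_pos_of_pos_of_nonneg (hnoise k) <|
      mul_nonneg (effectiveGain_nonneg (Hbar := Hbar) hΓ hsnr k) (h.1.1 k)
  have hsubset : {y | (∀ k, 0 ≤ y k) ∧ ∑ k, y k = ∑ k, p q k} ⊆ stratSet N :=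
    fun y hy ↦ ⟨hy.1, hy.2 ▸ h.1.2⟩
  exact deriv_le_deriv_of_isLocalMaxOn_sum h.1.1 hderiv
    ((h.isMaxOn_sum_log i.pos).on_subset hsubset).localize hi j

theorem IsSoleUser.noiseLevel_self (h : IsSoleUser p q k) : noiseLevel Hbar inr p q k = 1 := by
  rw [noiseLevel, sum_eq_zero, add_zero]
  exact fun s hs ↦ by rw [h.2 s (ne_of_mem_erase hs), mul_zero]

theorem IsSoleUser.noiseLevel_of_ne (h : IsSoleUser p r k) (hqr : q ≠ r) :
    noiseLevel Hbar inr p q k = 1 + inr r q * ‖Hbar r q k‖ ^ 2 * p r k := by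
  rw [noiseLevel, sum_eq_single_of_mem r (mem_erase.2 ⟨hqr.symm, mem_univ r⟩)]
  exact fun s _ hs ↦ by rw [h.2 s hs, mul_zero]

theorem IsSoleUser.noiseLevel_le (h : IsSoleUser p r k) (hqr : q ≠ r) (hΓ : 0 < Γ r)
    (hmed : Γ r * inr r q * ‖Hbar r q k‖ ^ 2 ≤ snr r * ‖Hbar r r k‖ ^ 2) :
    noiseLevel Hbar inr p q k ≤ 1 + effectiveGain Hbar Γ snr r k * p r k := by
  have hgain : inr r q * ‖Hbar r q k‖ ^ 2 ≤ effectiveGain Hbar Γ snr r k := by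
    rw [effectiveGain, le_div_iff₀ hΓ]
    linarith
  rw [h.noiseLevel_of_ne hqr]
  gcongr
  exact h.1.le

theorem IsBestResponse.gain_div_le_of_isSoleUser (h : IsBestResponse Hbar Γ snr inr p q)
    (hqr : q ≠ r) (hΓq : 0 ≤ Γ q) (hΓr : 0 < Γ r) (hsnr : 0 ≤ snr q)
    (hinr : ∀ s ≠ q, 0 ≤ inr s q) (hp : ∀ s ≠ q, ∀ k, 0 ≤ p s k) {kq kr : Fin N}
    (hq : IsSoleUser p q kq) (hr : IsSoleUser p r kr)
    (hmed : Γ r * inr r q * ‖Hbar r q kr‖ ^ 2 ≤ snr r * ‖Hbar r r kr‖ ^ 2) :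
    effectiveGain Hbar Γ snr q kr / (1 + effectiveGain Hbar Γ snr r kr * p r kr) ≤
      effectiveGain Hbar Γ snr q kq / (1 + effectiveGain Hbar Γ snr q kq * p q kq) :=
  calc
    _ ≤ effectiveGain Hbar Γ snr q kr / noiseLevel Hbar inr p q kr :=
      div_le_div_of_nonneg_left (effectiveGain_nonneg hΓq hsnr kr)
        (noiseLevel_pos hinr fun s hs ↦ hp s hs kr) (hr.noiseLevel_le hqr hΓr hmed)
    _ ≤ _ := by
      simpa [hr.2 q hqr, hq.noiseLevel_self] using h.gain_div_le_of_pos hΓq hsnr hinr hp hq.1 kr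

theorem effectiveGain_div_effectiveGain (k : Fin N) :
    effectiveGain Hbar Γ snr r k / effectiveGain Hbar Γ snr q k =
      snr r / Γ r / (snr q / Γ q) * (‖Hbar r r k‖ ^ 2 / ‖Hbar q q k‖ ^ 2) := by
  simp only [effectiveGain, mul_div_right_comm _ (‖_‖ ^ 2) (Γ _), mul_div_mul_comm]

theorem subcarrier_allocation_general (hqr : q ≠ r) (hH : ∀ k, Hbar q q k ≠ 0)
    (hΓ : ∀ s, 0 < Γ s) (hsnr : ∀ s, 0 < snr s) (hinr : ∀ s t, s ≠ t → 0 ≤ inr s t)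
    (hp : ∀ s k, 0 ≤ p s k)
    (hbq : IsBestResponse Hbar Γ snr inr p q) (hbr : IsBestResponse Hbar Γ snr inr p r)
    {kq kr : Fin N} (hq : IsSoleUser p q kq) (hr : IsSoleUser p r kr)
    (hmedq : Γ q * inr q r * ‖Hbar q r kq‖ ^ 2 ≤ snr q * ‖Hbar q q kq‖ ^ 2)
    (hmedr : Γ r * inr r q * ‖Hbar r q kr‖ ^ 2 ≤ snr r * ‖Hbar r r kr‖ ^ 2) :
    ‖Hbar r r kq‖ ^ 2 / ‖Hbar q q kq‖ ^ 2 ≤ ‖Hbar r r kr‖ ^ 2 / ‖Hbar q q kr‖ ^ 2 := by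
  let a := effectiveGain Hbar Γ snr
  have ha (s k) : 0 ≤ a s k := effectiveGain_nonneg (hΓ s).le (hsnr s).le k
  have haq (k) : 0 < a q k :=
    div_pos (mul_pos (hsnr q) (pow_pos (norm_pos_iff.2 (hH k)) 2)) (hΓ q)
  set X := 1 + a q kq * p q kq
  set Y := 1 + a r kr * p r kr
  have hX : 0 < X := add_pos_of_pos_of_nonneg one_pos (mul_nonneg (ha q kq) (hp q kq))
  have hY : 0 < Y := add_pos_of_pos_of_nonneg one_pos (mul_nonneg (ha r kr) (hp r kr))
  have hqle : a q kr / Y ≤ a q kq / X :=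
    hbq.gain_div_le_of_isSoleUser hqr (hΓ q).le (hΓ r) (hsnr q).le (hinr · q)
      (fun s _ ↦ hp s) hq hr hmedr
  have hrle : a r kq / X ≤ a r kr / Y :=
    hbr.gain_div_le_of_isSoleUser hqr.symm (hΓ r).le (hΓ q) (hsnr r).le (hinr · r)
      (fun s _ ↦ hp s) hr hq hmedq
  have hratio : a r kq / a q kq ≤ a r kr / a q kr :=
    calc
      a r kq / a q kq = a r kq / X / (a q kq / X) := by field_simp
      _ ≤ a r kr / Y / (a q kr / Y) :=
        div_le_div₀ (div_nonneg (ha r kr) hY.le) hrle (div_pos (haq kr) hY) hqle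
      _ = a r kr / a q kr := by field_simp
  rw [effectiveGain_div_effectiveGain, effectiveGain_div_effectiveGain] at hratio
  exact le_of_mul_le_mul_left hratio (div_pos (div_pos (hsnr r) (hΓ r)) (div_pos (hsnr q) (hΓ q)))

end SnrGame

/-- **Proposition 2 (subcarrier-allocation rule at orthogonal Nash equilibria).**
Let `p*` be a Nash equilibrium with pairwise disjoint supports using full power, and suppose
`Γ_q inr_qr |H̄_qr(k)|² ≤ snr_q |H̄_qq(k)|²` for every `q`, `r ≠ q` and `k ∈ I_q`. Then for
all `q ≠ r`, `k_r ∈ I_r` and `k_q ∈ I_q`: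
`|H̄_rr(k_r)|²/|H̄_qq(k_r)|² ≥ |H̄_rr(k_q)|²/|H̄_qq(k_q)|²`. -/
theorem SnrGame.subcarrier_allocation (Q N : ℕ) (hQ : 1 ≤ Q) (hN : 1 ≤ N)
    (Hbar : Fin Q → Fin Q → Fin N → ℂ) (hH : ∀ q k, Hbar q q k ≠ 0)
    (Γ : Fin Q → ℝ) (hΓ : ∀ q, 1 ≤ Γ q)
    (snr : Fin Q → ℝ) (hsnr : ∀ q, 0 < snr q)
    (inr : Fin Q → Fin Q → ℝ) (hinr : ∀ r q, r ≠ q → 0 ≤ inr r q)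
    (p : Fin Q → Fin N → ℝ) (hNE : SnrGame.isNE Hbar Γ snr inr p)
    (horth : ∀ q r, q ≠ r → ∀ k, ¬(0 < p q k ∧ 0 < p r k))
    (hfull : ∀ q, (1 / (N : ℝ)) * ∑ k, p q k = 1)
    (hmed : ∀ q r, r ≠ q → ∀ k, 0 < p q k →
      Γ q * inr q r * ‖Hbar q r k‖ ^ 2 ≤ snr q * ‖Hbar q q k‖ ^ 2) :
    ∀ q r, q ≠ r → ∀ kr kq : Fin N, 0 < p r kr → 0 < p q kq →
      ‖Hbar r r kq‖ ^ 2 / ‖Hbar q q kq‖ ^ 2 ≤ ‖Hbar r r kr‖ ^ 2 / ‖Hbar q q kr‖ ^ 2 := by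
  have hp s k : 0 ≤ p s k := (hNE.1 s).1 k
  exact fun q r hqr kr kq hr hq ↦ SnrGame.subcarrier_allocation_general hqr (hH q)
    (fun s ↦ one_pos.trans_le (hΓ s)) hsnr hinr hp (hNE.isBestResponse q) (hNE.isBestResponse r)
    (SnrGame.isSoleUser_of_orthogonal hp horth hq) (SnrGame.isSoleUser_of_orthogonal hp horth hr)
    (hmed q r hqr.symm kq hq) (hmed r q hqr kr hr)
end

section
/- With the high-SINR rates, the rate region R = { r ∈ ℝ^Q : r_q ≥ 0 for all q, and there exists p ∈ P_1°×…×P_Q° with r_q ≤ R_q(p) for all q } is a convex subset of ℝ^Q. (Proposition 3: convexity of the achievable rate region in the low-interference/high-SNR regime.) -/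
/-!
In the logarithmic powers `u = log p` the problem is convex: `log (G p)` is affine in `u`, the
logarithm of noise plus interference is a log-sum-exp, hence convex by Hölder's inequality, and
the mask and power constraints are sublevel sets of increasing, respectively convex, functions. The
rate region is then the nonnegative part of the projection of the hypograph of a concave map.
-/

open scoped ENNReal

namespace HighSinr

/-- Strategy set `P_q°` with strictly positive powers, spectral-mask limits in `(0,∞]`,
and average power at most `1`. -/
def stratSet (N : ℕ) (pmax : Fin N → ℝ≥0∞) : Set (Fin N → ℝ) :=
  { p | (∀ k, 0 < p k ∧ ENNReal.ofReal (p k) ≤ pmax k) ∧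
        (1 / (N : ℝ)) * ∑ k, p k ≤ 1 }

variable {Q N : ℕ}

/-- High-SINR (low-interference) rate of user `q`:
`R_q(p) = (1/N) Σ_k log(G_qq(k) p_q(k) / (1 + Σ_{r≠q} G_rq(k) p_r(k)))`. -/
noncomputable def rate (Gc : Fin Q → Fin Q → Fin N → ℝ) (q : Fin Q)
    (p : Fin Q → Fin N → ℝ) : ℝ :=
  (1 / (N : ℝ)) * ∑ k, Real.log (Gc q q k * p q k /
    (1 + ∑ r ∈ Finset.univ.erase q, Gc r q k * p r k))

end HighSinr

namespace HighSinr

variable {ι E : Type*} {s : Finset ι}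

section OrderedModule

variable {𝕜 β : Type*} [Semiring 𝕜] [PartialOrder 𝕜] [AddCommMonoid E]
  [AddCommMonoid β] [PartialOrder β] [IsOrderedAddMonoid β] [Module 𝕜 β]

lemma convexOn_finsetSum [SMul 𝕜 E] {C : Set E} {f : ι → E → β} (hC : Convex 𝕜 C)
    (hf : ∀ i ∈ s, ConvexOn 𝕜 C (f i)) :
    ConvexOn 𝕜 C fun x => ∑ i ∈ s, f i x := by
  simpa only [Finset.sum_fn] using
    Finset.sum_induction f (ConvexOn 𝕜 C) (fun _ _ => ConvexOn.add) (convexOn_const 0 hC) hf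

lemma concaveOn_finsetSum [SMul 𝕜 E] {C : Set E} {f : ι → E → β} (hC : Convex 𝕜 C)
    (hf : ∀ i ∈ s, ConcaveOn 𝕜 C (f i)) :
    ConcaveOn 𝕜 C fun x => ∑ i ∈ s, f i x :=
  convexOn_finsetSum (β := βᵒᵈ) hC hf

lemma convex_setOf_exists_le_of_concaveOn [Module 𝕜 E] [PosSMulMono 𝕜 β] {C : Set E}
    {f : E → β} (hf : ConcaveOn 𝕜 C f) :
    Convex 𝕜 {y | ∃ x ∈ C, y ≤ f x} := by
  convert hf.convex_hypograph.linear_image (LinearMap.snd 𝕜 E β)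
  ext y
  simp

end OrderedModule

section LogConvex

lemma sum_rpow_mul_rpow_le {x y : ι → ℝ} (hx : ∀ i ∈ s, 0 ≤ x i) (hy : ∀ i ∈ s, 0 ≤ y i)
    {a b : ℝ} (ha : 0 ≤ a) (hb : 0 ≤ b) (hab : a + b = 1) :
    ∑ i ∈ s, x i ^ a * y i ^ b ≤ (∑ i ∈ s, x i) ^ a * (∑ i ∈ s, y i) ^ b := by
  rcases ha.eq_or_lt with rfl | ha
  · simp [show b = 1 by linarith]
  rcases hb.eq_or_lt with rfl | hb
  · simp [show a = 1 by linarith]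
  have holder := Real.inner_le_Lp_mul_Lq_of_nonneg s (.inv_inv ha hb hab)
    (fun i hi => Real.rpow_nonneg (hx i hi) a) fun i hi => Real.rpow_nonneg (hy i hi) b
  have hxa : ∑ i ∈ s, (x i ^ a) ^ a⁻¹ = ∑ i ∈ s, x i :=
    Finset.sum_congr rfl fun i hi => Real.rpow_rpow_inv (hx i hi) ha.ne'
  have hyb : ∑ i ∈ s, (y i ^ b) ^ b⁻¹ = ∑ i ∈ s, y i :=
    Finset.sum_congr rfl fun i hi => Real.rpow_rpow_inv (hy i hi) hb.ne'
  simpa only [hxa, hyb, one_div, inv_inv] using holder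

lemma log_rpow_mul_rpow {x y : ℝ} (hx : 0 < x) (hy : 0 < y) (a b : ℝ) :
    Real.log (x ^ a * y ^ b) = a * Real.log x + b * Real.log y := by
  rw [Real.log_mul (Real.rpow_pos_of_pos hx a).ne' (Real.rpow_pos_of_pos hy b).ne',
    Real.log_rpow hx, Real.log_rpow hy]

variable [AddCommMonoid E] [Module ℝ E] {C : Set E}

lemma convexOn_log_sum {f : ι → E → ℝ} (hs : s.Nonempty) (hpos : ∀ i ∈ s, ∀ x ∈ C, 0 < f i x)
    (hf : ∀ i ∈ s, ConvexOn ℝ C fun x => Real.log (f i x)) :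
    ConvexOn ℝ C fun x => Real.log (∑ i ∈ s, f i x) := by
  obtain ⟨j, hj⟩ := hs
  have hC : Convex ℝ C := (hf j hj).1
  have sum_pos : ∀ x ∈ C, 0 < ∑ i ∈ s, f i x := fun x hx =>
    Finset.sum_pos (fun i hi => hpos i hi x hx) ⟨j, hj⟩
  refine ⟨hC, fun x hx y hy a b ha hb hab => ?_⟩
  have hz : a • x + b • y ∈ C := hC hx hy ha hb hab
  have term_le : ∀ i ∈ s, f i (a • x + b • y) ≤ f i x ^ a * f i y ^ b := fun i hi => by
    have hxi := hpos i hi x hx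
    have hyi := hpos i hi y hy
    rw [← Real.log_le_log_iff (hpos i hi _ hz) (by positivity), log_rpow_mul_rpow hxi hyi]
    exact (hf i hi).2 hx hy ha hb hab
  calc Real.log (∑ i ∈ s, f i (a • x + b • y))
      ≤ Real.log ((∑ i ∈ s, f i x) ^ a * (∑ i ∈ s, f i y) ^ b) :=
        Real.log_le_log (sum_pos _ hz) <| (Finset.sum_le_sum term_le).trans <|
          sum_rpow_mul_rpow_le (fun i hi => (hpos i hi x hx).le) (fun i hi => (hpos i hi y hy).le)
            ha hb hab
    _ = a • Real.log (∑ i ∈ s, f i x) + b • Real.log (∑ i ∈ s, f i y) :=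
        log_rpow_mul_rpow (sum_pos x hx) (sum_pos y hy) a b

lemma convexOn_log_one_add_sum {f : ι → E → ℝ} (hC : Convex ℝ C)
    (hpos : ∀ i ∈ s, ∀ x ∈ C, 0 < f i x)
    (hf : ∀ i ∈ s, ConvexOn ℝ C fun x => Real.log (f i x)) :
    ConvexOn ℝ C fun x => Real.log (1 + ∑ i ∈ s, f i x) := by
  -- The constant `1` is one more log-convex summand, indexed by `none`.
  have log_sum_option := convexOn_log_sum (C := C) (s := Finset.insertNone s)
    (f := fun i x => i.elim 1 fun j => f j x) ⟨none, by simp⟩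
    (Finset.forall_mem_insertNone.2 ⟨fun _ _ => one_pos, hpos⟩)
    (Finset.forall_mem_insertNone.2 ⟨by simpa using convexOn_const (0 : ℝ) hC, hf⟩)
  simpa using log_sum_option

lemma convexOn_log_const_mul_exp {c : ℝ} {g : E → ℝ} (hc : c ≠ 0) (hg : ConvexOn ℝ C g) :
    ConvexOn ℝ C fun x => Real.log (c * Real.exp (g x)) := by
  refine (hg.add_const (Real.log c)).congr fun x _ => ?_
  simp [Real.log_mul hc (Real.exp_ne_zero _), add_comm]

end LogConvex

variable {Q N : ℕ}

lemma rate_exp_eq {Gc : Fin Q → Fin Q → Fin N → ℝ} {q : Fin Q} (hGc : ∀ r k, 0 < Gc r q k)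
    (u : Fin Q → Fin N → ℝ) :
    rate Gc q (fun r k => Real.exp (u r k)) = (1 / (N : ℝ)) * ∑ k, (u q k + Real.log (Gc q q k) -
      Real.log (1 + ∑ r ∈ Finset.univ.erase q, Gc r q k * Real.exp (u r k))) := by
  refine congrArg _ (Finset.sum_congr rfl fun k _ => ?_)
  have hG := hGc q k
  have hden : 0 < 1 + ∑ r ∈ Finset.univ.erase q, Gc r q k * Real.exp (u r k) :=
    add_pos_of_pos_of_nonneg one_pos <|
      Finset.sum_nonneg fun r _ => (mul_pos (hGc r k) (Real.exp_pos _)).le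
  rw [Real.log_div (by positivity) hden.ne', Real.log_mul hG.ne' (Real.exp_ne_zero _),
    Real.log_exp, add_comm (u q k)]

lemma concaveOn_rate_exp {Gc : Fin Q → Fin Q → Fin N → ℝ} {q : Fin Q}
    (hGc : ∀ r k, 0 < Gc r q k) :
    ConcaveOn ℝ Set.univ fun u : Fin Q → Fin N → ℝ =>
      rate Gc q fun r k => Real.exp (u r k) := by
  simp only [rate_exp_eq hGc]
  let coord (r : Fin Q) (k : Fin N) : (Fin Q → Fin N → ℝ) →ₗ[ℝ] ℝ :=
    LinearMap.proj k ∘ₗ LinearMap.proj r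
  refine (concaveOn_finsetSum convex_univ fun k _ => ?_).smul (by positivity)
  have signal : ConcaveOn ℝ Set.univ fun u => coord q k u + Real.log (Gc q q k) :=
    ((coord q k).concaveOn convex_univ).add_const _
  have interference : ConvexOn ℝ Set.univ fun u =>
      Real.log (1 + ∑ r ∈ Finset.univ.erase q, Gc r q k * Real.exp (coord r k u)) :=
    convexOn_log_one_add_sum convex_univ (fun r _ _ _ => mul_pos (hGc r k) (Real.exp_pos _))
      fun r _ => convexOn_log_const_mul_exp (hGc r k).ne' ((coord r k).convexOn convex_univ)
  exact signal.sub interference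

/-- The strategy set `P_q°` in the logarithmic powers `u(k) = log p(k)`. -/
def logStratSet (N : ℕ) (pmax : Fin N → ℝ≥0∞) : Set (Fin N → ℝ) :=
  {u | (fun k => Real.exp (u k)) ∈ stratSet N pmax}

lemma log_mem_logStratSet {pmax : Fin N → ℝ≥0∞} {p : Fin N → ℝ} (hp : p ∈ stratSet N pmax) :
    (fun k => Real.log (p k)) ∈ logStratSet N pmax := by
  simpa only [logStratSet, Set.mem_ofPred_eq, Real.exp_log (hp.1 _).1] using hp

lemma convex_logStratSet (pmax : Fin N → ℝ≥0∞) : Convex ℝ (logStratSet N pmax) := by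
  let coord (k : Fin N) : (Fin N → ℝ) →ₗ[ℝ] ℝ := LinearMap.proj k
  have mask (k : Fin N) :
      Convex ℝ {u : Fin N → ℝ | ENNReal.ofReal (Real.exp (u k)) ≤ pmax k} := by
    have mask_mono : Monotone fun t : ℝ => ENNReal.ofReal (Real.exp t) :=
      ENNReal.ofReal_mono.comp Real.exp_monotone
    simpa [coord] using (mask_mono.convex_le (pmax k)).linear_preimage (coord k)
  have convexOn_exp_coord (k : Fin N) : ConvexOn ℝ Set.univ fun u : Fin N → ℝ => Real.exp (u k) :=
    convexOn_exp.comp_linearMap (coord k)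
  have power : Convex ℝ {u : Fin N → ℝ | (1 / (N : ℝ)) * ∑ k, Real.exp (u k) ≤ 1} := by
    simpa using ((convexOn_finsetSum convex_univ fun k _ => convexOn_exp_coord k).smul
      (by positivity : (0 : ℝ) ≤ 1 / N)).convex_le 1
  convert (convex_iInter mask).inter power using 1
  ext u
  simp [logStratSet, stratSet, Real.exp_pos]

lemma exists_stratSet_iff_exists_logStratSet {pmax : Fin Q → Fin N → ℝ≥0∞}
    {P : (Fin Q → Fin N → ℝ) → Prop} :
    (∃ p, (∀ q, p q ∈ stratSet N (pmax q)) ∧ P p) ↔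
      ∃ u ∈ Set.univ.pi fun q => logStratSet N (pmax q), P fun q k => Real.exp (u q k) := by
  constructor
  · rintro ⟨p, hp, hP⟩
    refine ⟨fun q k => Real.log (p q k), fun q _ => log_mem_logStratSet (hp q), ?_⟩
    simpa only [Real.exp_log ((hp _).1 _).1] using hP
  · rintro ⟨u, hu, hP⟩
    exact ⟨fun q k => Real.exp (u q k), fun q => hu q trivial, hP⟩

end HighSinr

/-- **Proposition 3 (convexity of the achievable rate region in the
low-interference/high-SNR regime).** With the high-SINR rates, the rate region
`R = { r ∈ ℝ^Q : r_q ≥ 0 ∀q, ∃ p ∈ P_1°×…×P_Q°, r_q ≤ R_q(p) ∀q }` is convex. -/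
theorem HighSinr.rate_region_convex (Q N : ℕ) (hQ : 1 ≤ Q) (hN : 1 ≤ N)
    (Gc : Fin Q → Fin Q → Fin N → ℝ) (hGc : ∀ r q k, 0 < Gc r q k)
    (pmax : Fin Q → Fin N → ℝ≥0∞) (hpmax : ∀ q k, 0 < pmax q k) :
    Convex ℝ { r : Fin Q → ℝ | (∀ q, 0 ≤ r q) ∧
      ∃ p : Fin Q → Fin N → ℝ, (∀ q, p q ∈ HighSinr.stratSet N (pmax q)) ∧
        ∀ q, r q ≤ HighSinr.rate Gc q p } := by
  have hC : Convex ℝ (Set.univ.pi fun q => HighSinr.logStratSet N (pmax q)) :=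
    convex_pi fun q _ => HighSinr.convex_logStratSet (pmax q)
  have concaveOn_rates : ConcaveOn ℝ (Set.univ.pi fun q => HighSinr.logStratSet N (pmax q))
      fun u q => HighSinr.rate Gc q fun r k => Real.exp (u r k) :=
    ⟨hC, fun _ _ _ _ _ _ ha hb hab q =>
      (HighSinr.concaveOn_rate_exp fun r => hGc r q).2 trivial trivial ha hb hab⟩
  simp only [HighSinr.exists_stratSet_iff_exists_logStratSet]
  exact (convex_Ici 0).inter (HighSinr.convex_setOf_exists_le_of_concaveOn concaveOn_rates)
end
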